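/- arXiv:2501.18499 — 3 statements merged into one kernel-verified Lean document; each statement's English description precedes it below -/
import Mathlib

section
/- (Loop removal) Every diagram d : ▶^m → ▶^n in Syn_M is PGA-equal to an acyclic diagram, i.e. to a diagram composed only of the generators player0, lose0, player1, lose1, merge, start and priority p (no cup or cap). -/
set_option autoImplicit true
set_option linter.unusedVariables false

namespace PaperPG

/-! ## The diagrammatic syntax `Syn_M` and the equational theory PGA -/

/-- The two generating objects (wire colours): `r` = ▶ and `l` = ◀. -/
inductive Obj : Type
  | r : Obj
  | l : Obj
  deriving DecidableEq

/-- Objects of the free prop: words over `{▶, ◀}`. -/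
abbrev Word := List Obj

/-- The word `▶^m`. -/
def rword (m : ℕ) : Word := List.replicate m Obj.r

/-- Morphisms of the free two-coloured prop `Syn_M`: formal (sequential and parallel)
composites of identities, symmetries and the generators of the calculus of parity
games, with priorities bounded by `M`. -/
inductive Syn (M : ℕ) : Word → Word → Type where
  | id : (v : Word) → Syn M v v
  | comp : {u v w : Word} → Syn M u v → Syn M v w → Syn M u w
  | tensor : {u1 w1 u2 w2 : Word} → Syn M u1 w1 → Syn M u2 w2 → Syn M (u1 ++ u2) (w1 ++ w2)
  | symm : (v w : Word) → Syn M (v ++ w) (w ++ v)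
  | player0 : Syn M [Obj.r] [Obj.r, Obj.r]
  | lose0 : Syn M [Obj.r] []
  | player1 : Syn M [Obj.r] [Obj.r, Obj.r]
  | lose1 : Syn M [Obj.r] []
  | merge : Syn M [Obj.r, Obj.r] [Obj.r]
  | start : Syn M [] [Obj.r]
  | priority : Fin (M + 1) → Syn M [Obj.r] [Obj.r]
  | cup : Syn M [] [Obj.r, Obj.l]
  | cap : Syn M [Obj.l, Obj.r] []

infixl:60 " ⨟ " => Syn.comp
infixl:65 " ⊠ " => Syn.tensor

/-- Transport a diagram along equalities of words. -/
def Syn.castHom {M : ℕ} {u u' w w' : Word} (hu : u = u') (hw : w = w')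
    (f : Syn M u w) : Syn M u' w' := by
  subst hu; subst hw; exact f

/-- The inner body of the parity axiom: `merge ⨟ player0` followed by
`(player1 ⨟ (id ⊠ priority p)) ⊠ id`. -/
def parityBody (M : ℕ) (p : Fin (M + 1)) : Syn M [Obj.r, Obj.r] [Obj.r, Obj.r, Obj.r] :=
  Syn.merge ⨟ Syn.player0
    ⨟ ((Syn.player1 ⨟ (Syn.id [Obj.r] ⊠ Syn.priority p) : Syn M [Obj.r] [Obj.r, Obj.r])
        ⊠ Syn.id [Obj.r])

/-- The left-hand side of the parity axiom (E): the feedback loop formed, via `cup`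
and `cap`, by feeding the `priority p` output of `parityBody` back to its second
input. -/
def parityLHS (M : ℕ) (p : Fin (M + 1)) : Syn M [Obj.r] [Obj.r, Obj.r] :=
  (Syn.id [Obj.r] ⊠ Syn.cup : Syn M [Obj.r] [Obj.r, Obj.r, Obj.l])
  ⨟ (parityBody M p ⊠ Syn.id [Obj.l] : Syn M [Obj.r, Obj.r, Obj.l] [Obj.r, Obj.r, Obj.r, Obj.l])
  ⨟ ((Syn.id [Obj.r] ⊠ Syn.id [Obj.r]) ⊠ Syn.symm [Obj.r] [Obj.l] :
      Syn M [Obj.r, Obj.r, Obj.r, Obj.l] [Obj.r, Obj.r, Obj.l, Obj.r])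
  ⨟ ((Syn.id [Obj.r] ⊠ Syn.symm [Obj.r] [Obj.l]) ⊠ Syn.id [Obj.r] :
      Syn M [Obj.r, Obj.r, Obj.l, Obj.r] [Obj.r, Obj.l, Obj.r, Obj.r])
  ⨟ ((Syn.id [Obj.r] ⊠ Syn.cap) ⊠ Syn.id [Obj.r] :
      Syn M [Obj.r, Obj.l, Obj.r, Obj.r] [Obj.r, Obj.r])

/-- The smallest congruence (with respect to sequential and parallel composition) on
the morphisms of `Syn_M` containing the laws of symmetric monoidal categories and the
axioms of Parity Game Algebra (PGA): (A) compact closure and loop removal,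
(B) the distributive lattice axioms, (C) the priority axioms, (D) the distributive
law of priorities over the lattice structure and (E) the parity axiom. -/
inductive PGAeq {M : ℕ} : {v w : Word} → Syn M v w → Syn M v w → Prop where
  -- equivalence
  | refl (f : Syn M v w) : PGAeq f f
  | symm_rel {f g : Syn M v w} : PGAeq f g → PGAeq g f
  | trans {f g h : Syn M v w} : PGAeq f g → PGAeq g h → PGAeq f h
  -- congruence with respect to the two compositions
  | comp_congr {f f' : Syn M u v} {g g' : Syn M v w} :
      PGAeq f f' → PGAeq g g' → PGAeq (f ⨟ g) (f' ⨟ g')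
  | tensor_congr {f f' : Syn M u1 w1} {g g' : Syn M u2 w2} :
      PGAeq f f' → PGAeq g g' → PGAeq (f ⊠ g) (f' ⊠ g')
  -- laws of (strict) symmetric monoidal categories
  | comp_assoc (f : Syn M u v) (g : Syn M v w) (h : Syn M w x) :
      PGAeq ((f ⨟ g) ⨟ h) (f ⨟ (g ⨟ h))
  | id_comp (f : Syn M v w) : PGAeq (Syn.id v ⨟ f) f
  | comp_id (f : Syn M v w) : PGAeq (f ⨟ Syn.id w) f
  | tensor_id (v w : Word) : PGAeq (Syn.id v ⊠ Syn.id w) (Syn.id (v ++ w))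
  | interchange (f1 : Syn M u1 v1) (g1 : Syn M v1 w1) (f2 : Syn M u2 v2) (g2 : Syn M v2 w2) :
      PGAeq ((f1 ⨟ g1) ⊠ (f2 ⨟ g2)) ((f1 ⊠ f2) ⨟ (g1 ⊠ g2))
  | tensor_assoc (f : Syn M u1 w1) (g : Syn M u2 w2) (h : Syn M u3 w3) :
      PGAeq (Syn.castHom (List.append_assoc u1 u2 u3) (List.append_assoc w1 w2 w3)
              ((f ⊠ g) ⊠ h))
            (f ⊠ (g ⊠ h))
  | tensor_nil (f : Syn M u w) :
      PGAeq (Syn.castHom (List.append_nil u) (List.append_nil w) (f ⊠ Syn.id [])) f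
  | swap_nat (f : Syn M u1 w1) (g : Syn M u2 w2) :
      PGAeq ((f ⊠ g) ⨟ Syn.symm w1 w2) (Syn.symm u1 u2 ⨟ (g ⊠ f))
  | swap_inv (v w : Word) : PGAeq (Syn.symm v w ⨟ Syn.symm w v) (Syn.id (v ++ w))
  | hexagon (u v w : Word) :
      PGAeq (Syn.symm u (v ++ w))
        (Syn.castHom (List.append_assoc u v w) (List.append_assoc v w u).symm
          ((Syn.symm u v ⊠ Syn.id w)
            ⨟ Syn.castHom (List.append_assoc v u w).symm rfl (Syn.id v ⊠ Syn.symm u w)))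
  -- (A) compact closure: yanking, and removal of a closed loop
  | yank_r : PGAeq (v := [Obj.r]) (w := [Obj.r]) ((Syn.cup ⊠ Syn.id [Obj.r]) ⨟ (Syn.id [Obj.r] ⊠ Syn.cap))
      (Syn.id [Obj.r])
  | yank_l : PGAeq (v := [Obj.l]) (w := [Obj.l]) ((Syn.id [Obj.l] ⊠ Syn.cup) ⨟ (Syn.cap ⊠ Syn.id [Obj.l]))
      (Syn.id [Obj.l])
  | loop : PGAeq (v := ([] : Word)) (w := ([] : Word)) (Syn.cup ⨟ Syn.symm [Obj.r] [Obj.l] ⨟ Syn.cap) (Syn.id [])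
  -- (B) distributive lattice axioms
  | B1 : PGAeq (v := [Obj.r, Obj.r, Obj.r]) (w := [Obj.r]) ((Syn.merge ⊠ Syn.id [Obj.r]) ⨟ Syn.merge)
      ((Syn.id [Obj.r] ⊠ Syn.merge) ⨟ Syn.merge)
  | B2 : PGAeq (v := [Obj.r, Obj.r]) (w := [Obj.r]) (Syn.symm [Obj.r] [Obj.r] ⨟ Syn.merge) Syn.merge
  | B3r : PGAeq (v := [Obj.r]) (w := [Obj.r]) ((Syn.id [Obj.r] ⊠ Syn.start) ⨟ Syn.merge) (Syn.id [Obj.r])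
  | B3l : PGAeq (v := [Obj.r]) (w := [Obj.r]) ((Syn.start ⊠ Syn.id [Obj.r]) ⨟ Syn.merge) (Syn.id [Obj.r])
  | B4 : PGAeq (v := [Obj.r]) (w := [Obj.r, Obj.r, Obj.r]) (Syn.player0 ⨟ (Syn.player0 ⊠ Syn.id [Obj.r]))
      (Syn.player0 ⨟ (Syn.id [Obj.r] ⊠ Syn.player0))
  | B5 : PGAeq (v := [Obj.r]) (w := [Obj.r, Obj.r]) (Syn.player0 ⨟ Syn.symm [Obj.r] [Obj.r]) Syn.player0
  | B6r : PGAeq (v := [Obj.r]) (w := [Obj.r]) (Syn.player0 ⨟ (Syn.lose0 ⊠ Syn.id [Obj.r])) (Syn.id [Obj.r])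
  | B6l : PGAeq (v := [Obj.r]) (w := [Obj.r]) (Syn.player0 ⨟ (Syn.id [Obj.r] ⊠ Syn.lose0)) (Syn.id [Obj.r])
  | B7 : PGAeq (v := [Obj.r]) (w := [Obj.r, Obj.r, Obj.r]) (Syn.player1 ⨟ (Syn.player1 ⊠ Syn.id [Obj.r]))
      (Syn.player1 ⨟ (Syn.id [Obj.r] ⊠ Syn.player1))
  | B8 : PGAeq (v := [Obj.r]) (w := [Obj.r, Obj.r]) (Syn.player1 ⨟ Syn.symm [Obj.r] [Obj.r]) Syn.player1
  | B9r : PGAeq (v := [Obj.r]) (w := [Obj.r]) (Syn.player1 ⨟ (Syn.lose1 ⊠ Syn.id [Obj.r])) (Syn.id [Obj.r])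
  | B9l : PGAeq (v := [Obj.r]) (w := [Obj.r]) (Syn.player1 ⨟ (Syn.id [Obj.r] ⊠ Syn.lose1)) (Syn.id [Obj.r])
  | B10 : PGAeq (v := [Obj.r, Obj.r]) (w := [Obj.r, Obj.r]) (Syn.merge ⨟ Syn.player0)
      ((Syn.player0 ⊠ Syn.player0)
        ⨟ ((Syn.id [Obj.r] ⊠ Syn.symm [Obj.r] [Obj.r]) ⊠ Syn.id [Obj.r] :
          Syn M [Obj.r, Obj.r, Obj.r, Obj.r] [Obj.r, Obj.r, Obj.r, Obj.r])
        ⨟ (Syn.merge ⊠ Syn.merge))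
  | B11 : PGAeq (v := [Obj.r, Obj.r]) (w := ([] : Word)) (Syn.merge ⨟ Syn.lose0) (Syn.lose0 ⊠ Syn.lose0)
  | B12 : PGAeq (v := ([] : Word)) (w := [Obj.r, Obj.r]) (Syn.start ⨟ Syn.player0) (Syn.start ⊠ Syn.start)
  | B13 : PGAeq (v := ([] : Word)) (w := [Obj.r, Obj.r]) (Syn.start ⨟ Syn.player1) (Syn.start ⊠ Syn.start)
  | B14 : PGAeq (v := ([] : Word)) (w := ([] : Word)) (Syn.start ⨟ Syn.lose0) (Syn.id [])
  | B15 : PGAeq (v := ([] : Word)) (w := ([] : Word)) (Syn.start ⨟ Syn.lose1) (Syn.id [])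
  | B16 : PGAeq (v := [Obj.r]) (w := [Obj.r]) (Syn.player0 ⨟ Syn.merge) (Syn.id [Obj.r])
  | B17 : PGAeq (v := [Obj.r]) (w := [Obj.r]) (Syn.player1 ⨟ Syn.merge) (Syn.id [Obj.r])
  | B18 : PGAeq (v := [Obj.r, Obj.r]) (w := [Obj.r, Obj.r]) (Syn.merge ⨟ Syn.player1)
      ((Syn.player1 ⊠ Syn.player1)
        ⨟ ((Syn.id [Obj.r] ⊠ Syn.symm [Obj.r] [Obj.r]) ⊠ Syn.id [Obj.r] :
          Syn M [Obj.r, Obj.r, Obj.r, Obj.r] [Obj.r, Obj.r, Obj.r, Obj.r])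
        ⨟ (Syn.merge ⊠ Syn.merge))
  | B19 : PGAeq (v := [Obj.r, Obj.r]) (w := ([] : Word)) (Syn.merge ⨟ Syn.lose1) (Syn.lose1 ⊠ Syn.lose1)
  | B20 : PGAeq (v := [Obj.r]) (w := [Obj.r, Obj.r, Obj.r]) (Syn.player0 ⨟ (Syn.player1 ⊠ Syn.id [Obj.r]))
      (Syn.player1 ⨟ (Syn.player0 ⊠ Syn.player0)
        ⨟ ((Syn.id [Obj.r] ⊠ Syn.symm [Obj.r] [Obj.r]) ⊠ Syn.id [Obj.r] :
          Syn M [Obj.r, Obj.r, Obj.r, Obj.r] [Obj.r, Obj.r, Obj.r, Obj.r])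
        ⨟ ((Syn.id [Obj.r] ⊠ Syn.id [Obj.r]) ⊠ Syn.merge :
          Syn M [Obj.r, Obj.r, Obj.r, Obj.r] [Obj.r, Obj.r, Obj.r]))
  | B21 : PGAeq (v := [Obj.r]) (w := [Obj.r]) (Syn.player0 ⨟ (Syn.lose1 ⊠ Syn.id [Obj.r])) (Syn.lose1 ⨟ Syn.start)
  | B22 : PGAeq (v := [Obj.r]) (w := [Obj.r, Obj.r, Obj.r]) (Syn.player1 ⨟ (Syn.player0 ⊠ Syn.id [Obj.r]))
      (Syn.player0 ⨟ (Syn.player1 ⊠ Syn.player1)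
        ⨟ ((Syn.id [Obj.r] ⊠ Syn.symm [Obj.r] [Obj.r]) ⊠ Syn.id [Obj.r] :
          Syn M [Obj.r, Obj.r, Obj.r, Obj.r] [Obj.r, Obj.r, Obj.r, Obj.r])
        ⨟ ((Syn.id [Obj.r] ⊠ Syn.id [Obj.r]) ⊠ Syn.merge :
          Syn M [Obj.r, Obj.r, Obj.r, Obj.r] [Obj.r, Obj.r, Obj.r]))
  | B23 : PGAeq (v := [Obj.r]) (w := [Obj.r]) (Syn.player1 ⨟ (Syn.lose0 ⊠ Syn.id [Obj.r])) (Syn.lose0 ⨟ Syn.start)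
  -- (C) priority axioms
  | C1 (p : Fin (M + 1)) : PGAeq (v := [Obj.r, Obj.r]) (w := [Obj.r]) ((Syn.priority p ⊠ Syn.priority p) ⨟ Syn.merge)
      (Syn.merge ⨟ Syn.priority p)
  | C2 (p : Fin (M + 1)) : PGAeq (v := ([] : Word)) (w := [Obj.r]) (Syn.start ⨟ Syn.priority p) Syn.start
  | C3 (p q : Fin (M + 1)) : PGAeq (v := [Obj.r]) (w := [Obj.r]) (Syn.priority p ⨟ Syn.priority q)
      (Syn.priority (max p q))
  | C4 : PGAeq (Syn.priority 0) (Syn.id [Obj.r])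
  -- (D) distributive law of priorities over the lattice structure
  | D1 (p : Fin (M + 1)) : PGAeq (v := [Obj.r]) (w := [Obj.r, Obj.r]) (Syn.priority p ⨟ Syn.player0)
      (Syn.player0 ⨟ (Syn.priority p ⊠ Syn.priority p))
  | D2 (p : Fin (M + 1)) : PGAeq (v := [Obj.r]) (w := ([] : Word)) (Syn.priority p ⨟ Syn.lose0) Syn.lose0
  | D3 (p : Fin (M + 1)) : PGAeq (v := [Obj.r]) (w := [Obj.r, Obj.r]) (Syn.priority p ⨟ Syn.player1)
      (Syn.player1 ⨟ (Syn.priority p ⊠ Syn.priority p))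
  | D4 (p : Fin (M + 1)) : PGAeq (v := [Obj.r]) (w := ([] : Word)) (Syn.priority p ⨟ Syn.lose1) Syn.lose1
  -- (E) the parity axiom
  | parity_even (p : Fin (M + 1)) (h : Even p.val) :
      PGAeq (parityLHS M p) Syn.player0
  | parity_odd (p : Fin (M + 1)) (h : Odd p.val) :
      PGAeq (v := [Obj.r]) (w := [Obj.r, Obj.r]) (parityLHS M p) (Syn.start ⊠ Syn.id [Obj.r])
/-! ## Acyclic diagrams, layers and normal forms -/

/-- A diagram is *acyclic* if it is composed only of the generators
`player0, lose0, player1, lose1, merge, start, priority p` (together with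
identities and wire crossings on `▶`-wires), i.e. it contains no `cup` or `cap`. -/
inductive Acyclic {M : ℕ} : {v w : Word} → Syn M v w → Prop where
  | id (k : ℕ) : Acyclic (Syn.id (rword k))
  | symm (k j : ℕ) : Acyclic (Syn.symm (rword k) (rword j))
  | player0 : Acyclic Syn.player0
  | lose0 : Acyclic Syn.lose0
  | player1 : Acyclic Syn.player1
  | lose1 : Acyclic Syn.lose1
  | merge : Acyclic Syn.merge
  | start : Acyclic Syn.start
  | priority (p : Fin (M + 1)) : Acyclic (Syn.priority p)
  | comp {u v w : Word} {f : Syn M u v} {g : Syn M v w} :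
      Acyclic f → Acyclic g → Acyclic (f ⨟ g)
  | tensor {u1 w1 u2 w2 : Word} {f : Syn M u1 w1} {g : Syn M u2 w2} :
      Acyclic f → Acyclic g → Acyclic (f ⊠ g)

/-- A *layer* of generators from `S`: a diagram built only from generators in `S`
together with identities and wire crossings. -/
inductive Layer {M : ℕ} (S : {v w : Word} → Syn M v w → Prop) :
    {v w : Word} → Syn M v w → Prop where
  | base {v w : Word} {f : Syn M v w} : S f → Layer S f
  | id (k : ℕ) : Layer S (Syn.id (rword k))
  | symm (k j : ℕ) : Layer S (Syn.symm (rword k) (rword j))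
  | comp {u v w : Word} {f : Syn M u v} {g : Syn M v w} :
      Layer S f → Layer S g → Layer S (f ⨟ g)
  | tensor {u1 w1 u2 w2 : Word} {f : Syn M u1 w1} {g : Syn M u2 w2} :
      Layer S f → Layer S g → Layer S (f ⊠ g)

/-- The generators `player0`, `lose0`. -/
inductive Gen0 {M : ℕ} : {v w : Word} → Syn M v w → Prop where
  | player0 : Gen0 Syn.player0
  | lose0 : Gen0 Syn.lose0

/-- The generators `player1`, `lose1`. -/
inductive Gen1 {M : ℕ} : {v w : Word} → Syn M v w → Prop where
  | player1 : Gen1 Syn.player1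
  | lose1 : Gen1 Syn.lose1

/-- The generators `priority p`. -/
inductive GenP {M : ℕ} : {v w : Word} → Syn M v w → Prop where
  | priority (p : Fin (M + 1)) : GenP (Syn.priority p)

/-- The generators `merge`, `start`. -/
inductive GenM {M : ℕ} : {v w : Word} → Syn M v w → Prop where
  | merge : GenM Syn.merge
  | start : GenM Syn.start

/-- A diagram is in *normal form* when it factors into a layer of `player0/lose0`,
followed by a layer of `player1/lose1`, followed by a layer of priorities, followed
by a layer of `merge/start`. -/
def InNormalForm {M : ℕ} {v w : Word} (d : Syn M v w) : Prop :=
  ∃ (a b c : Word) (f1 : Syn M v a) (f2 : Syn M a b) (f3 : Syn M b c) (f4 : Syn M c w),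
    Layer Gen0 f1 ∧ Layer Gen1 f2 ∧ Layer GenP f3 ∧ Layer GenM f4 ∧
    d = f1 ⨟ (f2 ⨟ (f3 ⨟ f4))

theorem rword_append (a b : ℕ) : rword a ++ rword b = rword (a + b) :=
  (List.replicate_add a b Obj.r).symm

theorem mergeN_dom (k : ℕ) :
    [Obj.r] ++ ((rword k ++ [Obj.r]) ++ rword k) = rword ((k + 1) + (k + 1)) := by
  show rword 1 ++ ((rword k ++ rword 1) ++ rword k) = rword ((k + 1) + (k + 1))
  simp only [rword_append]
  exact congrArg rword (by omega)

theorem mergeN_mid (k : ℕ) :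
    [Obj.r, Obj.r] ++ rword (k + k) = [Obj.r] ++ (([Obj.r] ++ rword k) ++ rword k) := by
  show rword 2 ++ rword (k + k) = rword 1 ++ ((rword 1 ++ rword k) ++ rword k)
  simp only [rword_append]
  exact congrArg rword (by omega)

/-- The `k`-wire generalisation `merge_k : ▶^{2k} → ▶^k` of `merge`, merging the
`i`-th wire of the first group with the `i`-th wire of the second group. -/
def mergeN (M : ℕ) : (k : ℕ) → Syn M (rword (k + k)) (rword k)
  | 0 => Syn.id []
  | k + 1 =>
      Syn.castHom (mergeN_dom k) rfl
        ((Syn.id [Obj.r] ⊠ (Syn.symm (rword k) [Obj.r] ⊠ Syn.id (rword k)))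
          ⨟ Syn.castHom (mergeN_mid k) rfl (Syn.merge ⊠ mergeN M k))

/-- The `k`-wire generalisation `start_k : ε → ▶^k` of `start`. -/
def startN (M : ℕ) : (k : ℕ) → Syn M [] (rword k)
  | 0 => Syn.id []
  | k + 1 => Syn.start ⊠ startN M k
theorem pgaEquiv (M : ℕ) (u w : Word) : Equivalence (@PGAeq M u w) :=
  ⟨PGAeq.refl, PGAeq.symm_rel, PGAeq.trans⟩

def synS (M : ℕ) (u w : Word) : Setoid (Syn M u w) := ⟨PGAeq, pgaEquiv M u w⟩

/-- Untyped diagrams modulo PGA: a domain, a codomain and possibly a class of diagrams. -/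
structure T (M : ℕ) where
  d : Word
  c : Word
  h : Option (Quotient (synS M d c))

namespace T
variable {M : ℕ}

def mk' {u w : Word} (f : Syn M u w) : T M := ⟨u, w, some (Quotient.mk _ f)⟩
def nn (u w : Word) : T M := ⟨u, w, none⟩

def qcomp {u v w : Word} (a : Quotient (synS M u v)) (b : Quotient (synS M v w)) :
    Quotient (synS M u w) :=
  Quotient.map₂ Syn.comp (fun _ _ h1 _ _ h2 => PGAeq.comp_congr h1 h2) a b

def qtensor {u v u' v' : Word} (a : Quotient (synS M u v)) (b : Quotient (synS M u' v')) :
    Quotient (synS M (u ++ u') (v ++ v')) :=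
  Quotient.map₂ Syn.tensor (fun _ _ h1 _ _ h2 => PGAeq.tensor_congr h1 h2) a b

def comp (f g : T M) : T M :=
  ⟨f.d, g.c, if e : f.c = g.d then
    f.h.bind fun a => g.h.map fun b => qcomp (e ▸ a) b else none⟩

def ten (f g : T M) : T M :=
  ⟨f.d ++ g.d, f.c ++ g.c, f.h.bind fun a => g.h.map fun b => qtensor a b⟩

instance : Mul (T M) := ⟨ten⟩

infixl:60 " ⊳ " => comp

def I (w : Word) : T M := mk' (Syn.id w)
def S (u v : Word) : T M := mk' (Syn.symm u v)

@[simp] theorem mk'_d {u w : Word} (f : Syn M u w) : (mk' f).d = u := id rfl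
@[simp] theorem mk'_c {u w : Word} (f : Syn M u w) : (mk' f).c = w := id rfl
@[simp] theorem nn_d (u w : Word) : (nn u w : T M).d = u := id rfl
@[simp] theorem nn_c (u w : Word) : (nn u w : T M).c = w := id rfl
@[simp] theorem comp_d (f g : T M) : (f ⊳ g).d = f.d := id rfl
@[simp] theorem comp_c (f g : T M) : (f ⊳ g).c = g.c := id rfl
@[simp] theorem mul_d (f g : T M) : (f * g).d = f.d ++ g.d := id rfl
@[simp] theorem mul_c (f g : T M) : (f * g).c = f.c ++ g.c := id rfl
@[simp] theorem I_d (w : Word) : (I w : T M).d = w := id rfl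
@[simp] theorem I_c (w : Word) : (I w : T M).c = w := id rfl
@[simp] theorem S_d (u w : Word) : (S u w : T M).d = u ++ w := id rfl
@[simp] theorem S_c (u w : Word) : (S u w : T M).c = w ++ u := id rfl

theorem mk'_eq {u w : Word} {f g : Syn M u w} (h : PGAeq f g) : mk' f = mk' g := by
  unfold mk'
  congr 2
  exact Quotient.sound h

theorem eq_of_mk' {u w : Word} {f g : Syn M u w} (h : mk' f = mk' g) : PGAeq f g := by
  unfold mk' at h
  simp only [T.mk.injEq, heq_eq_eq, true_and, Option.some.injEq] at h
  exact Quotient.exact h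

theorem mk'_cast {u u' w w' : Word} (hu : u = u') (hw : w = w') (f : Syn M u w) :
    mk' (Syn.castHom hu hw f) = mk' f := by
  subst hu; subst hw; rfl

theorem cases' (f : T M) : (∃ (u w : Word) (g : Syn M u w), f = mk' g) ∨ (∃ u w, f = nn u w) := by
  rcases f with ⟨d, c, _ | h⟩
  · exact Or.inr ⟨d, c, rfl⟩
  · induction h using Quotient.inductionOn with
    | h a => exact Or.inl ⟨d, c, a, rfl⟩

theorem comp_mk {u v w : Word} (f : Syn M u v) (g : Syn M v w) : mk' f ⊳ mk' g = mk' (f ⨟ g) := by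
  simp [comp, mk']; rfl

theorem nn_comp (u v : Word) (g : T M) : nn u v ⊳ g = nn u g.c := by
  by_cases h : v = g.d <;> simp [comp, nn, h]

theorem comp_nn (f : T M) (u v : Word) : f ⊳ nn u v = nn f.d v := by
  simp [comp, nn]

theorem comp_ne (f g : T M) (h : f.c ≠ g.d) : f ⊳ g = nn f.d g.c := by
  simp [comp, nn, h]

theorem mul_def (f g : T M) : f * g = ten f g := rfl

theorem ten_mk {u v u' v' : Word} (f : Syn M u v) (g : Syn M u' v') :
    mk' f * mk' g = mk' (f ⊠ g) := by
  simp [mul_def, ten, mk']; rfl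

theorem nn_ten (u v : Word) (g : T M) : nn u v * g = nn (u ++ g.d) (v ++ g.c) := by
  simp [mul_def, ten, nn]

theorem ten_nn (f : T M) (u v : Word) : f * nn u v = nn (f.d ++ u) (f.c ++ v) := by
  simp [mul_def, ten, nn]

theorem comp_assoc' (f g h : T M) : (f ⊳ g) ⊳ h = f ⊳ (g ⊳ h) := by
  by_cases h1 : f.c = g.d
  · by_cases h2 : g.c = h.d
    · rcases cases' f with ⟨u, v, f, rfl⟩ | ⟨u, v, rfl⟩
      · rcases cases' g with ⟨v', w, g, rfl⟩ | ⟨v', w, rfl⟩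
        · rcases cases' h with ⟨w', x, h, rfl⟩ | ⟨w', x, rfl⟩
          · simp at h1 h2; subst h1; subst h2
            simp only [comp_mk]; exact mk'_eq (PGAeq.comp_assoc _ _ _)
          · simp [comp_nn]
        · simp [comp_nn, nn_comp]
      · simp [nn_comp]
    · rw [comp_ne _ h (by simpa using h2), comp_ne g h h2, comp_nn]; rfl
  · rw [comp_ne f g h1, comp_ne f (g ⊳ h) (by simpa using h1), nn_comp]; rfl

theorem id_comp' (f : T M) (w : Word) (e : f.d = w) : I w ⊳ f = f := by
  subst e
  rcases cases' f with ⟨u, v, f, rfl⟩ | ⟨u, v, rfl⟩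
  · exact (comp_mk _ _).trans (mk'_eq (PGAeq.id_comp _))
  · simp [comp_nn]

theorem comp_id' (f : T M) (w : Word) (e : f.c = w) : f ⊳ I w = f := by
  subst e
  rcases cases' f with ⟨u, v, f, rfl⟩ | ⟨u, v, rfl⟩
  · exact (comp_mk _ _).trans (mk'_eq (PGAeq.comp_id _))
  · simp [nn_comp]

theorem mul_assoc' (f g h : T M) : (f * g) * h = f * (g * h) := by
  rcases cases' f with ⟨u, v, f, rfl⟩ | ⟨u, v, rfl⟩
  · rcases cases' g with ⟨v', w, g, rfl⟩ | ⟨v', w, rfl⟩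
    · rcases cases' h with ⟨w', x, h, rfl⟩ | ⟨w', x, rfl⟩
      · simp only [ten_mk]
        rw [← mk'_eq (PGAeq.tensor_assoc _ _ _), mk'_cast]
      · simp [ten_nn]
    · simp [ten_nn, nn_ten]
  · simp [nn_ten]

theorem mul_I_nil (f : T M) : f * I [] = f := by
  rcases cases' f with ⟨u, v, f, rfl⟩ | ⟨u, v, rfl⟩
  · unfold I
    rw [ten_mk]
    conv_rhs => rw [← mk'_eq (PGAeq.tensor_nil f), mk'_cast]
  · simp [nn_ten]

theorem interchange' (f g f' g' : T M) (h : f.c = g.d) (h' : f'.c = g'.d) :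
    (f ⊳ g) * (f' ⊳ g') = (f * f') ⊳ (g * g') := by
  rcases cases' f with ⟨u, v, f, rfl⟩ | ⟨u, v, rfl⟩
  · rcases cases' g with ⟨v', w, g, rfl⟩ | ⟨v', w, rfl⟩
    · rcases cases' f' with ⟨u1, v1, f', rfl⟩ | ⟨u1, v1, rfl⟩
      · rcases cases' g' with ⟨v1', w1, g', rfl⟩ | ⟨v1', w1, rfl⟩
        · simp at h h'; subst h; subst h'
          simp only [comp_mk, ten_mk]; exact mk'_eq (PGAeq.interchange _ _ _ _)
        · simp [comp_nn, ten_nn]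
      · simp [ten_nn, nn_comp]
    · simp [comp_nn, nn_ten]
  · simp [nn_comp, nn_ten]

theorem I_mul_I (u v : Word) : (I u * I v : T M) = I (u ++ v) :=
  (ten_mk _ _).trans (mk'_eq (PGAeq.tensor_id _ _))

theorem S_nat (f g : T M) : (f * g) ⊳ S f.c g.c = S f.d g.d ⊳ (g * f) := by
  rcases cases' f with ⟨u, v, f, rfl⟩ | ⟨u, v, rfl⟩
  · rcases cases' g with ⟨v', w, g, rfl⟩ | ⟨v', w, rfl⟩
    · have e := mk'_eq (PGAeq.swap_nat f g)
      rw [← comp_mk, ← comp_mk, ← ten_mk, ← ten_mk] at e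
      exact e
    · simp [ten_nn, nn_comp, nn_ten, comp_nn]
  · simp [ten_nn, nn_comp, nn_ten, comp_nn]

theorem S_inv (u v : Word) : (S u v ⊳ S v u : T M) = I (u ++ v) :=
  (comp_mk _ _).trans (mk'_eq (PGAeq.swap_inv _ _))

theorem S_hex (u v w : Word) : (S u (v ++ w) : T M) = (S u v * I w) ⊳ (I v * S u w) := by
  show mk' _ = (mk' _ * mk' _) ⊳ (mk' _ * mk' _)
  rw [mk'_eq (PGAeq.hexagon u v w), mk'_cast]
  simp only [ten_mk]
  rw [← mk'_cast (List.append_assoc v u w).symm rfl (Syn.id v ⊠ Syn.symm u w), comp_mk]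

theorem S_nil (u : Word) : (S u [] : T M) = I u := by
  have h := S_hex (M := M) u [] []
  have h3 := S_nat (M := M) (I []) (S u [])
  simp only [I_c, I_d, S_c, S_d, List.append_nil, List.nil_append, mul_I_nil] at h h3
  rw [S_inv] at h3
  have h4 : (I [] * S u [] : T M) = S u [] := by
    have := congrArg (· ⊳ S u []) h3
    simp only [comp_assoc', S_inv] at this
    rw [comp_id' _ _ (by simp), id_comp' _ _ (by simp)] at this
    exact this
  rw [h4] at h
  have h5 := congrArg (fun t => S [] u ⊳ t) h
  simp only [← comp_assoc', S_inv] at h5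
  rw [id_comp' _ _ (by simp)] at h5
  simpa using h5.symm

theorem S_nil' (u : Word) : (S [] u : T M) = I u := by
  have h := S_inv (M := M) [] u
  rw [S_nil, comp_id' _ _ (by simp)] at h
  exact h

theorem I_nil_mul (f : T M) : I [] * f = f := by
  have h3 := S_nat (M := M) (I []) f
  rw [I_c, I_d, S_nil', S_nil', mul_I_nil, comp_id' _ _ (by simp), id_comp' _ _ (by simp)] at h3
  exact h3

instance : Monoid (T M) where
  one := I []
  mul_assoc := mul_assoc'
  one_mul := I_nil_mul
  mul_one := mul_I_nil

@[simp] theorem I_nil : (I [] : T M) = 1 := rfl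
@[simp] theorem one_d : (1 : T M).d = [] := id rfl
@[simp] theorem one_c : (1 : T M).c = [] := id rfl

theorem wl (x : Word) (f g : T M) : I x * (f ⊳ g) = (I x * f) ⊳ (I x * g) := by
  by_cases h : f.c = g.d
  · rw [← interchange' _ _ _ _ (by simp) h, id_comp' _ _ (by simp)]
  · rw [comp_ne _ _ h, comp_ne _ _ (by simpa using h), ten_nn]; simp

theorem wr (x : Word) (f g : T M) : (f ⊳ g) * I x = (f * I x) ⊳ (g * I x) := by
  by_cases h : f.c = g.d
  · rw [← interchange' _ _ _ _ h (by simp), id_comp' _ _ (by simp)]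
  · rw [comp_ne _ _ h, comp_ne _ _ (by simpa using h), nn_ten]; simp

theorem I_mul_I_assoc (u v : Word) (f : T M) : I u * (I v * f) = I (u ++ v) * f := by
  rw [← mul_assoc, I_mul_I]

theorem ten_fst (f g : T M) : f * g = (f * I g.d) ⊳ (I f.c * g) := by
  rw [← interchange' _ _ _ _ (by simp) (by simp), id_comp' _ _ rfl, comp_id' _ _ rfl]

theorem ten_snd (f g : T M) : f * g = (I f.d * g) ⊳ (f * I g.c) := by
  rw [← interchange' _ _ _ _ (by simp) (by simp), id_comp' _ _ rfl, comp_id' _ _ rfl]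

attribute [simp] comp_assoc' mul_assoc' I_mul_I I_mul_I_assoc wl wr S_nil S_nil' id_comp' comp_id'
  S_inv

@[simp] theorem id_mul (f g h : T M) (x : Word) (e : f.d = x) : I x ⊳ (f ⊳ g) = f ⊳ g := by
  rw [← comp_assoc', id_comp' _ _ e]

/-- exchange of two disjoint slices -/
theorem exch (f g : T M) (x y z : Word) :
    (I x * (f * I (y ++ (g.d ++ z)))) ⊳ (I (x ++ (f.c ++ y)) * (g * I z)) =
    (I (x ++ (f.d ++ y)) * (g * I z)) ⊳ (I x * (f * I (y ++ (g.c ++ z)))) := by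
  have h1 := ten_fst (I x * f * I y) (g * I z)
  have h2 := ten_snd (I x * f * I y) (g * I z)
  rw [h1] at h2
  simpa using h2

theorem S_nat1 (f : T M) (u : Word) : (f * I u) ⊳ S f.c u = S f.d u ⊳ (I u * f) := by
  simpa using S_nat f (I u)

theorem S_nat2 (f : T M) (u : Word) : (I u * f) ⊳ S u f.c = S u f.d ⊳ (f * I u) := by
  simpa using S_nat (I u) f

theorem S_hex' (u v w : Word) : (S (u ++ v) w : T M) = (I u * S v w) ⊳ (S u w * I v) := by
  have h : (S w (u ++ v) ⊳ ((I u * S v w) ⊳ (S u w * I v)) : T M) = I (w ++ (u ++ v)) := by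
    rw [S_hex]
    have e1 : (I u * S w v ⊳ (I u * S v w) : T M) = I (u ++ (w ++ v)) := by
      rw [← wl, S_inv]; simp
    have e2 : (S w u * I v ⊳ (S u w * I v) : T M) = I (w ++ (u ++ v)) := by
      rw [← wr, S_inv]; simp
    calc _ = (S w u * I v) ⊳ (I u * S w v ⊳ (I u * S v w)) ⊳ (S u w * I v) := by simp
      _ = _ := by rw [e1, comp_id' _ _ (by simp), e2]
  have h2 := congrArg (fun t => S (u ++ v) w ⊳ t) h
  simp only [← comp_assoc', S_inv] at h2
  rw [comp_assoc', id_comp' _ _ (by simp), comp_id' _ _ (by simp)] at h2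
  exact h2.symm


@[simp] theorem S_inv_a (u v : Word) (X : T M) (e : u ++ v = X.d) : S u v ⊳ (S v u ⊳ X) = X := by
  rw [← comp_assoc', S_inv, id_comp' _ _ e.symm]
@[simp] theorem S_inv_l (x u v : Word) : (I x * S u v) ⊳ (I x * S v u : T M) = I (x ++ (u ++ v)) := by
  rw [← wl, S_inv, I_mul_I]
@[simp] theorem S_inv_r (y u v : Word) : (S u v * I y) ⊳ (S v u * I y : T M) = I (u ++ (v ++ y)) := by
  rw [← wr, S_inv, I_mul_I]; simp
@[simp] theorem S_inv_lr (x y u v : Word) :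
    (I x * (S u v * I y)) ⊳ (I x * (S v u * I y) : T M) = I (x ++ (u ++ (v ++ y))) := by
  rw [← wl, S_inv_r, I_mul_I]
@[simp] theorem S_inv_la (x u v : Word) (X : T M) (e : x ++ (u ++ v) = X.d) :
    (I x * S u v) ⊳ ((I x * S v u) ⊳ X) = X := by
  rw [← comp_assoc', S_inv_l, id_comp' _ _ e.symm]
@[simp] theorem S_inv_ra (y u v : Word) (X : T M) (e : (u ++ (v ++ y)) = X.d) :
    (S u v * I y) ⊳ ((S v u * I y) ⊳ X) = X := by
  rw [← comp_assoc', S_inv_r, id_comp' _ _ e.symm]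
@[simp] theorem S_inv_lra (x y u v : Word) (X : T M) (e : x ++ (u ++ (v ++ y)) = X.d) :
    (I x * (S u v * I y)) ⊳ ((I x * (S v u * I y)) ⊳ X) = X := by
  rw [← comp_assoc', S_inv_lr, id_comp' _ _ e.symm]

end T

namespace T
variable {M : ℕ}
open Obj

theorem wh (x y : Word) {A B : T M} (e : A = B) : I x * (A * I y) = I x * (B * I y) := by rw [e]
theorem re {A B C : T M} (e : A ⊳ B = C) (X : T M) : A ⊳ (B ⊳ X) = C ⊳ X := by
  rw [← e, comp_assoc']
theorem rc {L R : T M} (e : L = R) (X : T M) : L ⊳ X = R ⊳ X := by rw [e]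

def mg : T M := mk' Syn.merge
def sta : T M := mk' Syn.start
def p0 : T M := mk' Syn.player0
def p1 : T M := mk' Syn.player1
def l0 : T M := mk' Syn.lose0
def l1 : T M := mk' Syn.lose1
def pr (p : Fin (M + 1)) : T M := mk' (Syn.priority p)
def cu : T M := mk' Syn.cup
def ca : T M := mk' Syn.cap
def ca' : T M := S [r] [l] ⊳ ca
@[simp] theorem mg_d : (mg : T M).d = [r, r] := id rfl
@[simp] theorem mg_c : (mg : T M).c = [r] := id rfl
@[simp] theorem sta_d : (sta : T M).d = [] := id rfl
@[simp] theorem sta_c : (sta : T M).c = [r] := id rfl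
@[simp] theorem p0_d : (p0 : T M).d = [r] := id rfl
@[simp] theorem p0_c : (p0 : T M).c = [r, r] := id rfl
@[simp] theorem p1_d : (p1 : T M).d = [r] := id rfl
@[simp] theorem p1_c : (p1 : T M).c = [r, r] := id rfl
@[simp] theorem l0_d : (l0 : T M).d = [r] := id rfl
@[simp] theorem l0_c : (l0 : T M).c = [] := id rfl
@[simp] theorem l1_d : (l1 : T M).d = [r] := id rfl
@[simp] theorem l1_c : (l1 : T M).c = [] := id rfl
@[simp] theorem pr_d (p) : (pr p : T M).d = [r] := id rfl
@[simp] theorem pr_c (p) : (pr p : T M).c = [r] := id rfl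
@[simp] theorem cu_d : (cu : T M).d = [] := id rfl
@[simp] theorem cu_c : (cu : T M).c = [r, l] := id rfl
@[simp] theorem ca_d : (ca : T M).d = [l, r] := id rfl
@[simp] theorem ca_c : (ca : T M).c = [] := id rfl
@[simp] theorem ca'_d : (ca' : T M).d = [r, l] := id rfl
@[simp] theorem ca'_c : (ca' : T M).c = [] := id rfl

/-- classes of acyclic diagrams -/
def Acy (f : T M) : Prop := ∃ (u w : Word) (g : Syn M u w), Acyclic g ∧ f = mk' g

def RW (w : Word) : Prop := ∃ k, w = rword k

theorem RW.append {u v : Word} (h : RW u) (h' : RW v) : RW (u ++ v) := by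
  obtain ⟨a, rfl⟩ := h; obtain ⟨b, rfl⟩ := h'; exact ⟨_, rword_append a b⟩
theorem RW.nil : RW [] := ⟨0, rfl⟩
theorem RW.r : RW [Obj.r] := ⟨1, rfl⟩
theorem RW.rr : RW [Obj.r, Obj.r] := ⟨2, rfl⟩
theorem RW.cons {o : Obj} {v : Word} (h : RW (o :: v)) : o = Obj.r ∧ RW v := by
  obtain ⟨a, h⟩ := h
  cases a with
  | zero => simp [rword] at h
  | succ a => simp [rword, List.replicate_succ] at h; exact ⟨h.1, ⟨a, h.2⟩⟩
theorem RW.left {u v : Word} (h : RW (u ++ v)) : RW u := by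
  induction u with
  | nil => exact RW.nil
  | cons o u ih =>
    obtain ⟨rfl, h'⟩ := RW.cons (v := u ++ v) h
    exact RW.append (u := [Obj.r]) RW.r (ih h')
theorem RW.right {u v : Word} (h : RW (u ++ v)) : RW v := by
  induction u with
  | nil => exact h
  | cons o u ih => exact ih (RW.cons h).2

theorem Acy.comp {f g : T M} (hf : Acy f) (hg : Acy g) (e : f.c = g.d) : Acy (f ⊳ g) := by
  obtain ⟨u, v, f, hf, rfl⟩ := hf
  obtain ⟨v', w, g, hg, rfl⟩ := hg
  simp at e; subst e
  exact ⟨_, _, _, hf.comp hg, comp_mk _ _⟩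
theorem Acy.mul {f g : T M} (hf : Acy f) (hg : Acy g) : Acy (f * g) := by
  obtain ⟨u, v, f, hf, rfl⟩ := hf
  obtain ⟨v', w, g, hg, rfl⟩ := hg
  exact ⟨_, _, _, hf.tensor hg, ten_mk _ _⟩
theorem Acy.I {w : Word} (h : RW w) : Acy (I w : T M) := by
  obtain ⟨k, rfl⟩ := h; exact ⟨_, _, _, Acyclic.id k, rfl⟩
theorem Acy.S {u w : Word} (h' : RW u) (h : RW w) : Acy (S u w : T M) := by
  obtain ⟨k, rfl⟩ := h; obtain ⟨j, rfl⟩ := h'; exact ⟨_, _, _, Acyclic.symm j k, rfl⟩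
theorem Acy.RWs {f : T M} (hf : Acy f) : RW f.d ∧ RW f.c := by
  obtain ⟨u, v, f, hf, rfl⟩ := hf
  simp only [mk'_d, mk'_c]
  induction hf with
  | id k => exact ⟨⟨k, rfl⟩, ⟨k, rfl⟩⟩
  | symm k j => exact ⟨.append ⟨k, rfl⟩ ⟨j, rfl⟩, .append ⟨j, rfl⟩ ⟨k, rfl⟩⟩
  | comp _ _ h1 h2 => exact ⟨h1.1, h2.2⟩
  | tensor _ _ h1 h2 => exact ⟨.append h1.1 h2.1, .append h1.2 h2.2⟩
  | _ => exact ⟨by first | exact ⟨0, rfl⟩ | exact ⟨1, rfl⟩ | exact ⟨2, rfl⟩,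
      by first | exact ⟨0, rfl⟩ | exact ⟨1, rfl⟩ | exact ⟨2, rfl⟩⟩
theorem Acy.mg : Acy (mg : T M) := ⟨_, _, _, .merge, rfl⟩
theorem Acy.sta : Acy (sta : T M) := ⟨_, _, _, .start, rfl⟩
theorem Acy.p0 : Acy (p0 : T M) := ⟨_, _, _, .player0, rfl⟩
theorem Acy.p1 : Acy (p1 : T M) := ⟨_, _, _, .player1, rfl⟩
theorem Acy.l0 : Acy (l0 : T M) := ⟨_, _, _, .lose0, rfl⟩
theorem Acy.l1 : Acy (l1 : T M) := ⟨_, _, _, .lose1, rfl⟩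
theorem Acy.pr (p) : Acy (pr p : T M) := ⟨_, _, _, .priority p, rfl⟩

theorem ax {u w : Word} {f g : Syn M u w} {A B : T M} (h : PGAeq f g) (hA : A = mk' f)
    (hB : B = mk' g) : A = B := by rw [hA, hB]; exact mk'_eq h

theorem yank_r : (cu * I [r]) ⊳ (I [r] * ca) = (I [r] : T M) :=
  ax PGAeq.yank_r rfl rfl

theorem yank_l : (I [l] * cu) ⊳ (ca * I [l]) = (I [l] : T M) :=
  ax PGAeq.yank_l rfl rfl


theorem S_cons (x : Word) (o : Obj) (w : Word) :
    (S x (o :: w) : T M) = (S x [o] * I w) ⊳ (I [o] * S x w) := by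
  simpa using S_hex (M := M) x [o] w
theorem S_cons' (x : Word) (o : Obj) (w : Word) :
    (S (o :: w) x : T M) = (I [o] * S w x) ⊳ (S [o] x * I w)  := by
  simpa using S_hex' (M := M) [o] w x

theorem sl_cu (o : Obj) : (I [o] * cu : T M) = (cu * I [o]) ⊳ S [r, l] [o] := by
  simpa using (S_nat1 (M := M) cu [o]).symm

theorem perm3 (a b c : Obj) : (S [a, b] [c] ⊳ ((I [c] * S [a] [b]) ⊳ (S [c] [b] * I [a])) : T M) =
    (S [a] [b] * I [c]) ⊳ (I [b] * S [a] [c]) := by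
  have e := S_nat1 (M := M) (S [a] [b]) [c]
  have e2 := S_cons' (M := M) [c] b [a]
  simp at e e2
  rw [← comp_assoc', ← e, e2]
  simp

theorem yank1 : (I [r] * cu) ⊳ ((I [r] * S [r] [l]) ⊳ (ca' * I [r])) = (I [r] : T M) := by
  have h2 := S_nat2 (M := M) ca [r]
  have h3 := S_cons (M := M) [r] l [r]
  have h4 := perm3 (M := M) r l r
  simp at h2 h3
  refine Eq.trans ?_ yank_r
  rw [h2, h3, ← h4, sl_cu]
  simp [ca']

theorem yank2 : (cu * I [l]) ⊳ ((S [r] [l] * I [l]) ⊳ (I [l] * ca')) = (I [l] : T M) := by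
  have h2 := S_nat1 (M := M) ca [l]
  have h3 := S_cons' (M := M) [l] r [l]
  have h4 := S_cons' (M := M) [l] l [r]
  have h5 := S_nat2 (M := M) (S [l] [l]) [r]
  have h6 := S_cons (M := M) [r] l [l]
  simp at h2 h5
  rw [h6] at h5
  simp at h5
  refine Eq.trans ?_ yank_l
  rw [h2, sl_cu, h3, h4]
  simp [ca']
  have h7 := rc h5
  simp only [comp_assoc'] at h7
  rw [h7]
  simp

theorem yank3 : (I [r] * cu) ⊳ ((S [r] [r] * I [l]) ⊳ (I [r] * ca')) = (I [r] : T M) := by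
  have h3 := S_cons (M := M) [r] r [l]
  have h4 := re (S_inv (M := M) [r, l] [r])
  rw [h3] at h4
  refine Eq.trans ?_ yank_r
  rw [sl_cu]
  simp [ca'] at h4 ⊢
  rw [h4]
  simp

def N : Word → Word → T M → Prop
  | [], _, f => Acy f
  | Obj.r :: y, K, f => N y (K ++ [r]) (f ⊳ S [r] (y ++ K))
  | Obj.l :: y, K, f => N y K ((I [r] * f) ⊳ (ca' * I (y ++ K)))

theorem N.post {y : Word} : ∀ {K K' : Word} {f g : T M}, Acy g → g.d = K → g.c = K' →
    f.c = y ++ K → N y K f → N y K' (f ⊳ (I y * g)) := by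
  induction y with
  | nil => intro K K' f g hg h1 h2 h3 h; simpa [N] using Acy.comp h hg (by simp [h1, h3])
  | cons o y ih =>
    intro K K' f g hg h1 h2 h3 h
    subst h1; subst h2
    cases o with
    | r =>
      have h4 := ih (hg.mul (Acy.I RW.r)) (by simp) rfl (by simp) h
      have e := S_nat2 (M := M) (I y * g) [r]
      simp only [N]
      simp at e h4 ⊢
      rw [e]; exact h4
    | l =>
      have h4 := ih hg rfl rfl (by simp) h
      have e := exch (M := M) ca' g [] y []
      simp only [N]
      simp at e h4 ⊢
      rw [← e]; exact h4

theorem N.pre {y : Word} : ∀ {K : Word} {f g : T M}, Acy g → g.c = f.d → N y K f →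
    N y K (g ⊳ f) := by
  induction y with
  | nil => intro K f g hg h1 h; exact hg.comp h h1
  | cons o y ih =>
    intro K f g hg h1 h
    cases o with
    | r => simpa [N] using ih hg (by simpa using h1) h
    | l => simpa [N] using ih ((Acy.I RW.r).mul hg) (by simpa using h1) h

/-- `f ⊗ r` -/
theorem N.mulR {y : Word} : ∀ {K : Word} {f : T M}, f.c = y ++ K → RW K → N y K f →
    N y (K ++ [r]) (f * I [r]) := by
  induction y with
  | nil => intro K f h1 hK h; exact Acy.mul h (Acy.I RW.r)
  | cons o y ih =>
    intro K f h1 hK h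
    cases o with
    | r =>
      have h2 := ih (by simp) (hK.append RW.r) h
      have h3 := N.post (y := y) (K := K ++ [r, r]) (f := (f ⊳ S [r] (y ++ K)) * I [r]) (g := I K * S [r] [r]) ((Acy.I hK).mul (Acy.S RW.r RW.r)) rfl rfl
        (by simp) (by simpa using h2)
      have e := S_hex (M := M) [r] (y ++ K) [r]
      simp only [N]
      simp at e h3 ⊢
      rw [e]; exact h3
    | l => simpa [N] using ih (by simp) hK h

/-- `g : a → b` preserves `N` -/
def Pres (g : T M) : Prop := ∀ (y K : Word) (f : T M), RW K → RW f.d → f.c = g.d ++ (y ++ K) →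
    N (g.d ++ y) K f → N (g.c ++ y) K (f ⊳ (g * I (y ++ K)))

theorem Pres.wl {g : T M} (hg : Pres g) (x : Word) : Pres (I x * g) := by
  intro y K f hK hd hc
  induction x generalizing f K with
  | nil => simpa using hg y K f hK hd (by simpa using hc)
  | cons o x ih =>
    cases o with
    | r =>
      intro h
      have h2 := ih _ _ (hK.append RW.r) (by simpa using hd) (by simp) h
      have e := S_nat2 (M := M) (I x * (g * I (y ++ K))) [r]
      simp at e h2
      simp [N]
      rw [e]; exact h2
    | l =>
      intro h
      have h2 := ih _ _ hK (by simpa using RW.r.append hd) (by simp) h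
      have e := exch (M := M) ca' g [] x (y ++ K)
      simp at e h2
      simp [N]
      rw [← e]; exact h2

theorem Pres.wr {g : T M} (hg : Pres g) (x : Word) : Pres (g * I x) := by
  intro y K f hK hd hc h
  have := hg (x ++ y) K f hK hd (by simpa using hc) (by simpa using h)
  simpa using this

theorem Pres.comp {g g' : T M} (hg : Pres g) (hg' : Pres g') (e : g.c = g'.d) : Pres (g ⊳ g') := by
  intro y K f hK hd hc h
  have h1 := hg y K f hK hd (by simpa using hc) (by simpa using h)
  have := hg' y K (f ⊳ (g * T.I (y ++ K))) hK (by simpa using hd) (by simp [e]) (by rw [← e]; exact h1)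
  simpa using this

theorem Pres.mul {g g' : T M} (hg : Pres g) (hg' : Pres g') : Pres (g * g') := by
  rw [ten_fst]
  exact (hg.wr _).comp (hg'.wl _) (by simp)

theorem Pres.id (w : Word) : Pres (T.I w : T M) := by
  intro y K f hK hd hc h
  simpa [hc] using h


theorem permrot (a z : Word) (o : Obj) :
    (S [o] (a ++ z) ⊳ S a (z ++ [o]) : T M) = S (o :: a) z := by
  have h1 := S_hex (M := M) [o] a z
  have h2 := S_hex (M := M) a z [o]
  have h3 := S_hex' (M := M) a [o] z
  have h4 := S_nat1 (M := M) (S [o] a) z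
  simp at h4
  rw [h1, h2]
  simp
  rw [← comp_assoc' (I a * S [o] z), ← h3, ← comp_assoc', h4]
  simp

theorem N.rot {a : Word} (ha : RW a) (y : Word) : ∀ (K : Word) (f : T M), f.c = a ++ (y ++ K) →
    (N (a ++ y) K f ↔ N y (K ++ a) (f ⊳ S a (y ++ K))) := by
  induction a with
  | nil => intro K f hc; simp at hc; simp [hc]
  | cons o a ih =>
    intro K f hc
    obtain ⟨rfl, ha'⟩ := ha.cons
    have h := permrot (M := M) a (y ++ K) r
    simp only [List.cons_append, N]
    rw [ih ha' _ _ (by simp)]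
    simp at h ⊢
    rw [h]

theorem Acy.pres {g : T M} (hg : Acy g) : Pres g := by
  intro y K f hK hd hc h
  obtain ⟨ha, hb⟩ := hg.RWs
  rw [N.rot ha _ _ _ hc] at h
  rw [N.rot hb _ _ _ (by simp)]
  have h2 := N.post ((Acy.I hK).mul hg) rfl rfl (by simp) h
  have e := S_nat1 (M := M) g (y ++ K)
  simp at e h2 ⊢
  rw [e]; exact h2

theorem LRL (f : T M) (y K : Word) :
    (I [r] * (f ⊳ S [r] (l :: (y ++ K)))) ⊳ (ca' * I (y ++ (K ++ [r]))) =
    ((I [r] * (f ⊳ (S [r] [l] * I (y ++ K)))) ⊳ (ca' * I (r :: (y ++ K)))) ⊳ S [r] (y ++ K) := by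
  have e := exch (M := M) ca' (S [r] (y ++ K)) [] [] []
  rw [S_cons]
  simp at e ⊢
  rw [e]

theorem Pres.Srl : Pres (S [r] [l] : T M) := by
  intro y K f hK hd hc h
  have e := LRL f y K
  simp [N] at e h ⊢
  rw [← e]; exact h

theorem Pres.Slr : Pres (S [l] [r] : T M) := by
  intro y K f hK hd hc h
  have e := LRL (f ⊳ (S [l] [r] * I (y ++ K))) y K
  simp at hc
  simp [N, hc] at e h ⊢
  rw [e]; simpa [hc] using h

theorem swapB : ((I [r, r] * S [l] [l]) ⊳ ((I [r] * (ca' * I [l])) ⊳ ca') : T M) =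
    (S [r] [r] * I [l, l]) ⊳ ((I [r] * (ca' * I [l])) ⊳ ca') := by
  have a1 := wh [r] [] (S_nat1 (M := M) ca' [l])
  have a2 := S_cons' (M := M) [l] r [l]
  have b1 := wh [] [l] (S_nat2 (M := M) ca' [r])
  have b2 := S_cons (M := M) [r] r [l]
  have e := exch (M := M) ca' ca' [] [] []
  simp [a2, b2] at a1 b1 e
  conv_lhs => rw [a1]
  conv_rhs => rw [b1]
  simp [e]

theorem Pres.Sll : Pres (S [l] [l] : T M) := by
  intro y K f hK hd hc h
  simp [N] at h hc ⊢
  have h2 := N.pre (g := S [r] [r] * T.I f.d) ((Acy.S RW.r RW.r).mul (Acy.I hd)) (by simp) h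
  have e := exch (M := M) (S [r] [r]) f [] [] []
  have e2 := wh [] (y ++ K) (swapB (M := M))
  simp [hc] at h2 e e2 ⊢
  rw [e2, re e.symm]
  simpa using h2

theorem Pres.cu : Pres (cu : T M) := by
  intro y K f hK hd hc h
  simp at hc
  have h2 := N.pre (g := S [r] f.d) (Acy.S RW.r hd) (by simp) (N.mulR (by simpa using hc) hK h)
  have e1 := S_nat2 (M := M) f [r]
  have e := exch (M := M) ca' (S [r] (y ++ K)) [] [] []
  have e2 := wh [] (y ++ K) (yank1 (M := M))
  simp [hc] at e1 e e2 h2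
  simp [N]
  rw [S_cons]
  simp
  rw [← e]
  have e3 := rc e2
  simp only [comp_assoc'] at e3
  rw [e3, id_comp' _ _ (by simp), e1]
  exact h2

end T

namespace T
variable {M : ℕ}
open Obj

def TrR (m z : Word) (F : T M) : T M := (I m * cu) ⊳ ((F * I [l]) ⊳ (I z * ca'))
@[simp] theorem TrR_d (m z : Word) (F : T M) : (TrR m z F).d = m := by simp [TrR]
@[simp] theorem TrR_c (m z : Word) (F : T M) : (TrR m z F).c = z := by simp [TrR]

theorem TrR_post {m z : Word} {F g : T M} (hg : g.d = z) :
    TrR m g.c (F ⊳ (g * I [r])) = TrR m z F ⊳ g := by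
  have e := exch (M := M) g ca' [] [] []
  simp [hg] at e
  simp [TrR, e]

theorem TrR_pre {z : Word} {F g : T M} :
    TrR g.d z ((g * I [r]) ⊳ F) = g ⊳ TrR g.c z F := by
  have e := rc (exch (M := M) g cu [] [] [])
  simp at e
  simp [TrR, e]

theorem TrR_wl (x : Word) {m z : Word} {F : T M} :
    I x * TrR m z F = TrR (x ++ m) (x ++ z) (I x * F) := by
  simp [TrR]

/-- the key property of acyclic diagrams -/
def TrAcy (M : ℕ) : Prop := ∀ (m z : Word) (F : T M), Acy F → F.d = m ++ [r] → F.c = z ++ [r] →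
  Acy (TrR m z F)

theorem NTr (H : TrAcy M) {y : Word} : ∀ {K m : Word} {F : T M}, RW K → RW m → F.d = m ++ [r] →
    F.c = y ++ (K ++ [r]) → N y (K ++ [r]) F → N y K (TrR m (y ++ K) F) := by
  induction y with
  | nil => intro K m F hK hm h1 h2 h; exact H _ _ _ h h1 (by simpa using h2)
  | cons o y ih =>
    intro K m F hK hm h1 h2 h
    cases o with
    | r =>
      have h3 := N.post (y := y) (g := I K * S [r] [r]) ((Acy.I hK).mul (Acy.S RW.r RW.r)) (by simp) rfl
        (by simp) h
      simp at h3
      have h4 := ih (K := K ++ [r]) (m := m) (F := F ⊳ (S [r] (y ++ (K ++ [r])) ⊳ (I (y ++ K) * S [r] [r]))) (hK.append RW.r) hm (by simpa using h1) (by simp) (by simpa using h3)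
      have e := S_hex (M := M) [r] (y ++ K) [r]
      have e2 := TrR_post (m := m) (z := r :: (y ++ K)) (F := F) (g := S [r] (y ++ K)) (by simp)
      simp at e h4 e2
      simp [N]
      rw [← e2]
      simp [e] at h4
      exact h4
    | l =>
      have h4 := ih (K := K) (m := r :: m) hK (RW.r.append hm) (by simpa using h1) (by simp) h
      have e2 := TrR_post (m := r :: m) (z := r :: l :: (y ++ K)) (F := I [r] * F) (g := ca' * I (y ++ K)) (by simp)
      have e3 := TrR_wl (M := M) [r] (m := m) (z := l :: (y ++ K)) (F := F)
      simp at e2 h4 e3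
      simp [N]
      rw [e3, ← e2]
      exact h4

theorem TrR_ca (z : Word) : TrR (l :: r :: z) z (S (l :: r :: z) [r] ⊳ ((ca' * I (r :: z)) ⊳ S [r] z)) =
    (ca * I z : T M) := by
  have h1 := S_hex' (M := M) [l] (r :: z) [r]
  have h2 := S_hex' (M := M) [r] z [r]
  have h3 := S_hex' (M := M) [r] [l] z
  have h4 := wh [l, r] [] (S_nat1 (M := M) cu z)
  have h5 := S_nat1 (M := M) ca' z
  have e3 := rc (exch (M := M) (S [r] [r]) (S [l] z) [l] [] [])
  have e4 := rc (wh [l] z (yank3 (M := M)))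
  simp at h1 h2 h3
  have h6 : (S [l] [r] ⊳ ca' : T M) = ca := by simp [ca']
  have h7 := rc (wh [] (r :: (z ++ [l])) h6)
  have e5 := (exch (M := M) ca (S [r] z) [] [] [l])
  have e5 := rc e5
  simp [h3] at h4 h5
  have e7 := exch (M := M) ca ca' [] z []
  have h5 := rc (wh [l, r] [] h5.symm)
  simp at h5 e7 e3 e4 e5 h7
  unfold TrR
  rw [h1, h2, ← h4]
  simp
  rw [h7, e5, e7, ← e3]
  rw [h5, e4]
  simp

theorem Pres.ca (H : TrAcy M) : Pres (ca : T M) := by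
  intro y K f hK hd hc h
  simp at hc
  simp [N] at h
  have h2 := N.pre (g := S f.d [r]) (Acy.S hd RW.r) (by simp) h
  have h3 := NTr H (K := K) (m := f.d) hK hd (by simp) (by simp) h2
  have e : TrR f.d (y ++ K) (S f.d [r] ⊳ ((T.I [r] * f) ⊳ ((ca' * T.I (r :: (y ++ K))) ⊳ S [r] (y ++ K))))
    = f ⊳ (T.ca * T.I (y ++ K)) := by
    have e1 := rc (S_nat1 (M := M) f [r])
    have e2 := TrR_pre (M := M) (z := y ++ K) (F := S (l :: r :: (y ++ K)) [r] ⊳ ((ca' * T.I (r :: (y ++ K))) ⊳ S [r] (y ++ K))) (g := f)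
    simp [hc] at e1 e2
    rw [← e1, e2, TrR_ca]
  simp at e h3 ⊢
  rw [← e]; exact h3

theorem Pres.S1 (a b : Obj) : Pres (S [a] [b] : T M) := by
  cases a <;> cases b
  · exact (Acy.S RW.r RW.r).pres
  · exact Pres.Srl
  · exact Pres.Slr
  · exact Pres.Sll

theorem Pres.S2 (a : Obj) (v : Word) : Pres (S [a] v : T M) := by
  induction v with
  | nil => rw [S_nil]; exact Pres.id _
  | cons b v ih =>
    rw [S_cons]
    exact ((Pres.S1 a b).wr v).comp (ih.wl [b]) (by simp)

theorem Pres.S (u v : Word) : Pres (S u v : T M) := by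
  induction u with
  | nil => rw [S_nil']; exact Pres.id _
  | cons b u ih =>
    rw [S_cons']
    exact (ih.wl [b]).comp ((Pres.S2 b v).wr u) (by simp)

theorem Pres.all (H : TrAcy M) {u w : Word} (d : Syn M u w) : Pres (mk' d) := by
  induction d with
  | id v => exact Pres.id v
  | comp f g hf hg => rw [← comp_mk]; exact hf.comp hg (by simp)
  | tensor f g hf hg => rw [← ten_mk]; exact hf.mul hg
  | symm v w => exact Pres.S v w
  | player0 => exact Acy.p0.pres
  | lose0 => exact Acy.l0.pres
  | player1 => exact Acy.p1.pres
  | lose1 => exact Acy.l1.pres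
  | merge => exact Acy.mg.pres
  | start => exact Acy.sta.pres
  | priority p => exact (Acy.pr p).pres
  | cup => exact Pres.cu
  | cap => exact Pres.ca H

theorem main_of (H : TrAcy M) (m n : ℕ) (d : Syn M (rword m) (rword n)) :
    ∃ d' : Syn M (rword m) (rword n), Acyclic d' ∧ PGAeq d d' := by
  have h := Pres.all H d [] [] (I (rword m)) RW.nil ⟨m, rfl⟩ (by simp)
  have h1 := (N.rot (M := M) ⟨m, rfl⟩ [] [] (I (rword m)) (by simp)).2
    (by simpa [N] using Acy.I ⟨m, rfl⟩)
  have h2 := h (by simpa using h1)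
  have h3 := (N.rot (M := M) ⟨n, rfl⟩ [] [] (mk' d) (by simp)).1 (by simpa using h2)
  simp [N] at h3
  obtain ⟨u, w, g, hg, e⟩ := h3
  have e1 : rword m = u := congrArg T.d e
  have e2 : rword n = w := congrArg T.c e
  subst e1; subst e2
  exact ⟨g, hg, eq_of_mk' e⟩

end T

namespace T
variable {M : ℕ}
open Obj

@[simp] theorem one_comp (f : T M) (e : f.d = []) : 1 ⊳ f = f := id_comp' f [] e
@[simp] theorem comp_one (f : T M) (e : f.c = []) : f ⊳ 1 = f := comp_id' f [] e

def mgo : Obj → T M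
  | Obj.r => mg
  | Obj.l => nn [l, l] [l]
def sto : Obj → T M
  | Obj.r => sta
  | Obj.l => nn [] [l]
@[simp] theorem mgo_d (o) : (mgo o : T M).d = [o, o] := by cases o <;> simp [mgo]
@[simp] theorem mgo_c (o) : (mgo o : T M).c = [o] := by cases o <;> simp [mgo]
@[simp] theorem sto_d (o) : (sto o : T M).d = [] := by cases o <;> simp [sto]
@[simp] theorem sto_c (o) : (sto o : T M).c = [o] := by cases o <;> simp [sto]

def mrg : Word → T M
  | [] => 1
  | o :: y => (I [o] * (S y [o] * I y)) ⊳ ((I [o, o] * mrg y) ⊳ (mgo o * I y))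
def st : Word → T M
  | [] => 1
  | o :: y => sto o * st y
@[simp] theorem mrg_d (w) : (mrg w : T M).d = w ++ w := by cases w <;> simp [mrg]
@[simp] theorem mrg_c (w) : (mrg w : T M).c = w := by cases w <;> simp [mrg]
@[simp] theorem st_d (w) : (st w : T M).d = [] := by
  induction w with
  | nil => simp [st]
  | cons o w ih => simp [st, ih]
@[simp] theorem st_c (w) : (st w : T M).c = w := by
  induction w with
  | nil => simp [st]
  | cons o w ih => simp [st, ih]
@[simp] theorem mrg_nil : (mrg [] : T M) = 1 := rfl
@[simp] theorem st_nil : (st [] : T M) = 1 := rfl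
@[simp] theorem mrg_r : (mrg [r] : T M) = mg := by simp [mrg, mgo]
@[simp] theorem st_r : (st [r] : T M) = sta := by simp [st, sto]

theorem st_append (u v : Word) : (st (u ++ v) : T M) = st u * st v := by
  induction u with
  | nil => simp
  | cons o u ih => simp [st, ih]

theorem mrg_append (u v : Word) : (mrg (u ++ v) : T M) =
    (I u * (S v u * I v)) ⊳ ((I (u ++ u) * mrg v) ⊳ (mrg u * I v)) := by
  induction u with
  | nil => simp
  | cons o u ih =>
    have h1 := S_hex' (M := M) u v [o]
    have h2 := S_hex (M := M) v [o] u
    have e1 := rc (exch (M := M) (S u [o]) (S v u) [o] [] v)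
    have e2 := rc (exch (M := M) (S u [o]) (mrg v) [o] u [])
    simp at h1 h2 e1 e2
    simp [mrg, ih, h1, h2]
    rw [e1, e2]

theorem I_nil' : (I [] : T M) = 1 := rfl

theorem mg_l : (sta * I [r]) ⊳ mg = (I [r] : T M) := ax PGAeq.B3l rfl rfl
theorem mg_r : (I [r] * sta) ⊳ mg = (I [r] : T M) := ax PGAeq.B3r rfl rfl
theorem mg_assoc : (mg * I [r]) ⊳ mg = ((I [r] * mg) ⊳ mg : T M) := ax PGAeq.B1 rfl rfl
theorem mg_comm : S [r] [r] ⊳ mg = (mg : T M) := ax PGAeq.B2 rfl rfl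

theorem mrg_l {w : Word} (h : RW w) : (st w * I w) ⊳ mrg w = (I w : T M) := by
  induction w with
  | nil => simp
  | cons o w ih =>
    obtain ⟨rfl, h'⟩ := h.cons
    have ih := rc (wh [r, r] [] (ih h'))
    have e1 := ten_fst (M := M) sta (st w * I (r :: w))
    have e2 := rc (wh [r] w (S_nat1 (M := M) (st w) [r]))
    have e3 := wh [] w (mg_l (M := M))
    simp at ih e1 e2 e3
    simp [st, sto, mgo, mrg, e1]
    rw [e2, ih, id_comp' _ _ (by simp), e3]
theorem mrg_r' {w : Word} (h : RW w) : (I w * st w) ⊳ mrg w = (I w : T M) := by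
  induction w with
  | nil => simp
  | cons o w ih =>
    obtain ⟨rfl, h'⟩ := h.cons
    have ih := rc (wh [r, r] [] (ih h'))
    have e1 := wh (r :: w) [] (ten_snd (M := M) sta (st w))
    have e2 := rc (wh [r] w (S_nat2 (M := M) sta w))
    have e3 := wh [] w (mg_r (M := M))
    have e4 := rc (exch (M := M) sta (st w) [r] w [])
    simp at ih e1 e2 e3 e4
    simp [st, sto, mgo, mrg, e1]
    rw [e2, ← e4, ih, id_comp' _ _ (by simp), e3]

theorem RW.rw {w : Word} (h : RW (Obj.r :: w)) : RW w := h.cons.2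

theorem Acy.st {w : Word} (h : RW w) : Acy (st w : T M) := by
  induction w with
  | nil => exact Acy.I RW.nil
  | cons o w ih => obtain ⟨rfl, h'⟩ := h.cons; exact Acy.sta.mul (ih h')
theorem Acy.mrg {w : Word} (h : RW w) : Acy (mrg w : T M) := by
  induction w with
  | nil => exact Acy.I RW.nil
  | cons o w ih =>
    obtain ⟨rfl, h'⟩ := h.cons;
    exact ((Acy.I RW.r).mul ((Acy.S h' RW.r).mul (Acy.I h'))).comp
      (((Acy.I RW.rr).mul (ih h')).comp (Acy.mg.mul (Acy.I h')) (by simp)) (by simp)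

theorem Acy.ind {P : (f : T M) → Acy f → Prop} (id : ∀ u (h : RW u), P (T.I u) (Acy.I h))
    (symm : ∀ u v (hu : RW u) (hv : RW v), P (T.S u v) (Acy.S hu hv))
    (comp : ∀ f g (hf : Acy f) (hg : Acy g) (e : f.c = g.d), P f hf → P g hg → P (f ⊳ g) (hf.comp hg e))
    (mul : ∀ f g (hf : Acy f) (hg : Acy g), P f hf → P g hg → P (f * g) (hf.mul hg))
    (p0 : P T.p0 Acy.p0) (p1 : P T.p1 Acy.p1) (l0 : P T.l0 Acy.l0) (l1 : P T.l1 Acy.l1)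
    (mg : P T.mg Acy.mg) (sta : P T.sta Acy.sta)
    (pr : ∀ p, P (T.pr p) (Acy.pr p)) (f : T M) (h : Acy f) : P f h := by
  have key : ∃ h, P f h := by
    obtain ⟨u, w, f, h, rfl⟩ := h
    induction h with
    | id k => exact ⟨_, id _ ⟨k, rfl⟩⟩
    | symm k j => exact ⟨_, symm _ _ ⟨k, rfl⟩ ⟨j, rfl⟩⟩
    | comp hf hg h1 h2 =>
      obtain ⟨a, h1⟩ := h1
      obtain ⟨b, h2⟩ := h2
      rw [← comp_mk]; exact ⟨_, comp _ _ a b (by simp) h1 h2⟩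
    | tensor hf hg h1 h2 =>
      obtain ⟨a, h1⟩ := h1
      obtain ⟨b, h2⟩ := h2
      rw [← ten_mk]; exact ⟨_, mul _ _ a b h1 h2⟩
    | player0 => exact ⟨_, p0⟩
    | player1 => exact ⟨_, p1⟩
    | lose0 => exact ⟨_, l0⟩
    | lose1 => exact ⟨_, l1⟩
    | merge => exact ⟨_, mg⟩
    | start => exact ⟨_, sta⟩
    | priority p => exact ⟨_, pr p⟩
  obtain ⟨_, key⟩ := key
  exact key

theorem st_nat {f : T M} (h : Acy f) : st f.d ⊳ f = st f.c := by
  induction f, h using Acy.ind with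
  | id u hu => simp
  | symm u v hu hv =>
    have e := S_nat (M := M) (st u) (st v)
    simp [st_append] at e ⊢
    exact e
  | comp f g hf hg e h1 h2 => rw [← comp_assoc', comp_d, h1, e, h2, comp_c]
  | mul f g hf hg h1 h2 => rw [mul_d, mul_c, st_append, st_append, ← interchange' _ _ _ _ (by simp) (by simp), h1, h2]
  | p0 => simpa [st, sto] using (ax PGAeq.B12 rfl rfl : sta ⊳ p0 = (sta * sta : T M))
  | p1 => simpa [st, sto] using (ax PGAeq.B13 rfl rfl : sta ⊳ p1 = (sta * sta : T M))
  | l0 => simpa [st, sto] using (ax PGAeq.B14 rfl rfl : sta ⊳ l0 = (I [] : T M))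
  | l1 => simpa [st, sto] using (ax PGAeq.B15 rfl rfl : sta ⊳ l1 = (I [] : T M))
  | pr p => simpa [st, sto] using (ax (PGAeq.C2 p) rfl rfl : sta ⊳ pr p = (sta : T M))
  | mg =>
    have e := rc (ten_fst (M := M) sta sta) mg
    simp [mg_r] at e
    have e2 := ten_snd (M := M) sta sta
    simp at e2
    rw [e2] at e
    simp at e
    simp [st, sto]
    rw [e2]
    simp [e]
  | sta => simp

theorem mrg_rr : (mrg [r, r] : T M) = (I [r] * (S [r] [r] * I [r])) ⊳ (mg * mg) := by
  have e := ten_snd (M := M) mg mg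
  simp at e
  simp [mrg, mgo, e]

theorem mrg_append' (u v : Word) : (mrg (u ++ v) : T M) =
    (I u * (S v u * I v)) ⊳ (mrg u * mrg v) := by
  have e := ten_snd (M := M) (mrg u) (mrg v)
  simp at e
  rw [e, mrg_append]

theorem permuv (u v : Word) : ((I u * (S v u * I v)) ⊳ S (u ++ u) (v ++ v) : T M) =
    (S u v * S u v) ⊳ (I v * (S u v * I u)) := by
  have e := S_hex' (M := M) u u (v ++ v)
  have e1 := S_hex (M := M) u v v
  have e2 := ten_snd (M := M) (S u v) (S u v)
  simp at e2
  simp [e, e1, e2]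

theorem mrg_nat {f : T M} (h : Acy f) : mrg f.d ⊳ f = (f * f) ⊳ mrg f.c := by
  induction f, h using Acy.ind with
  | id u hu => simp
  | symm u v hu hv =>
    simp only [S_d, S_c]
    rw [mrg_append', mrg_append']
    have e := S_nat (M := M) (mrg u) (mrg v)
    simp only [mrg_d, mrg_c] at e
    rw [comp_assoc', e, ← comp_assoc', permuv, comp_assoc']
  | comp f g hf hg e h1 h2 =>
    rw [← comp_assoc', comp_d, h1, comp_assoc', e, h2, comp_c, interchange' _ _ _ _ e e, comp_assoc']
  | mul f g hf hg h1 h2 =>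
    have e0 := S_nat (M := M) (g) (f)
    rw [mul_d, mul_c, mrg_append', mrg_append', comp_assoc', ← interchange' _ _ _ _ (by simp) (by simp), h1, h2,
       interchange' _ _ _ _ (by simp) (by simp), ← comp_assoc', ← comp_assoc']
    congr 1
    have e1 := interchange' (I f.d) (f) (S g.d f.d * I g.d) (f * (g * g)) (by simp) (by simp)
    have e2 := interchange' (S g.d f.d) (f * g) (I g.d) (g) (by simp) (by simp)
    have e3 := interchange' (f) (I f.c) (g * (f * g)) (S g.c f.c * I g.c) (by simp) (by simp)
    have e4 := interchange' (g * f) (S g.c f.c) (g) (I g.c)  (by simp) (by simp)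
    simp only [mul_assoc] at e1 e2 e3 e4 ⊢
    rw [← e1, ← e2, ← e3, ← e4, e0]
    simp
  | p0 => simpa [mrg_rr] using (ax PGAeq.B10 rfl rfl : mg ⊳ p0 = ((p0 * p0) ⊳ ((I [r] * S [r] [r]) * I [r]) ⊳ (mg * mg) : T M))
  | p1 => simpa [mrg_rr] using (ax PGAeq.B18 rfl rfl : mg ⊳ p1 = ((p1 * p1) ⊳ ((I [r] * S [r] [r]) * I [r]) ⊳ (mg * mg) : T M))
  | l0 => simpa using (ax PGAeq.B11 rfl rfl : mg ⊳ l0 = (l0 * l0 : T M))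
  | l1 => simpa using (ax PGAeq.B19 rfl rfl : mg ⊳ l1 = (l1 * l1 : T M))
  | pr p => simpa using (ax (PGAeq.C1 p) rfl rfl : (pr p * pr p) ⊳ mg = (mg ⊳ pr p : T M)).symm
  | mg =>
    have e := ten_fst (M := M) mg mg
    have a0 := mg_assoc (M := M)
    have a1 := wh [r] [] a0
    have a3 := rc a1 mg
    have c := rc (wh [r] [r] (mg_comm (M := M)))
    have e1 := rc (exch (M := M) mg mg [] [] [])
    simp at e a1 a3 c e1
    simp only [mg_d, mg_c, mrg_rr, mrg_r]
    have k : (mg * mg) ⊳ mg = ((I [r] * (mg * I [r])) ⊳ ((I [r] * mg) ⊳ mg) : T M) := by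
      rw [e]
      simp [e1, a0, a3]
    rw [comp_assoc', k, c]
  | sta => 
    have e := ten_snd (M := M) sta sta
    simp at e
    simp [e, mg_l]

end T

namespace T
variable {M : ℕ}
open Obj

theorem mrg_mid {w : Word} (h : RW w) : (I w * (S w w * I w)) ⊳ ((mrg w * mrg w) ⊳ mrg w) =
    ((mrg w * mrg w) ⊳ mrg w : T M) := by
  have e := mrg_nat (Acy.mrg (M := M) h)
  simp only [mrg_d, mrg_c, mrg_append'] at e
  simpa using e

theorem mrg_assoc {w : Word} (h : RW w) : (mrg w * I w) ⊳ mrg w = ((I w * mrg w) ⊳ mrg w : T M) := by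
  have e := congrArg (fun X => (I (w ++ w) * (st w * I w)) ⊳ X) (mrg_mid (M := M) h)
  have e1 := rc (interchange' (M := M) (I (w ++ w)) (mrg w) (st w * I w) (mrg w) (by simp) (by simp)) (mrg w)
  have e2 := rc (interchange' (M := M) (I w * st w) (mrg w) (I (w ++ w)) (mrg w) (by simp) (by simp)) (mrg w)
  have e3 := rc (wh w w (S_nat2 (M := M) (st w) w))
  rw [mrg_l h] at e1
  rw [mrg_r' h] at e2
  simp at e e1 e2 e3
  rw [e1, ← e, e3, ← e2]

theorem mrg_comm {w : Word} (h : RW w) : S w w ⊳ mrg w = (mrg w : T M) := by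
  have e := congrArg (fun X => (st w * (I (w ++ w) * st w)) ⊳ X) (mrg_mid (M := M) h)
  have e1 := rc (interchange' (M := M) (st w * I w) (mrg w) (I w * st w) (mrg w) (by simp) (by simp)) (mrg w)
  rw [mrg_l h, mrg_r' h] at e1
  have e3 := interchange' (M := M) (st w * I (w ++ w)) (I w * S w w) (st w) (I w) (by simp) (by simp)
  have e4 := interchange' (M := M) (st w) (I w) (I (w ++ w)) (S w w) (by simp) (by simp)
  have e5 := interchange' (M := M) (S w w) (I (w ++ w)) (I []) (st w) (by simp) (by simp)
  have e6 := interchange' (M := M) (I []) (st w) (S w w) (I (w ++ w) * st w) (by simp) (by simp)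
  simp only [mul_assoc', comp_id' _ _ (st_c _), comp_id' _ _ (I_c _), id_comp' _ _ (S_d _ _)] at e3 e4
  rw [← e4] at e3
  simp at e e1 e3 e5 e6
  rw [← comp_assoc', ← e3, e5, e6] at e
  simp at e
  rw [← e1] at e
  exact e

theorem mrg_split {F : T M} {m m' : Word} (h : Acy F) (hd : F.d = m ++ m') :
    F = (((I m * st m') ⊳ F) * ((st m * I m') ⊳ F)) ⊳ mrg F.c := by
  have hm : RW m := (hd ▸ h.RWs.1).left
  have hm' : RW m' := (hd ▸ h.RWs.1).right
  rw [interchange' _ _ _ _ (by simp [hd]) (by simp [hd]), comp_assoc', ← mrg_nat h, hd, mrg_append']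
  have e1 := interchange' (M := M) (I m * st m) (mrg m) (st m' * I m') (mrg m') (by simp) (by simp)
  rw [mrg_l hm', mrg_r' hm] at e1
  have e2 := wh m m' (S_nat (M := M) (st m') (st m))
  have e3 := rc e1 F
  simp at e2 e3
  rw [id_comp' _ _ hd] at e3
  simp
  rw [re e2, ← e3]

end T

namespace T
variable {M : ℕ}
open Obj

structure Hn (N : Word) (f : T M) : Prop where
  acy : Acy f
  d : f.d = [r]
  c : f.c = N
theorem Hn.rw {N : Word} {f : T M} (h : Hn N f) : RW N := h.c ▸ h.acy.RWs.2

structure Kc (k e : T M) : Prop where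
  acy : Acy k
  d : k.d = [r]
  c : k.c = [r, r]
  ed : e.d = [r]
  ec : e.c = []
  eacy : Acy e
  assoc : k ⊳ (k * I [r]) = k ⊳ (I [r] * k)
  comm : k ⊳ S [r] [r] = k
  unit : k ⊳ (e * I [r]) = I [r]
  idem : k ⊳ mg = I [r]
  prk : ∀ p, pr p ⊳ k = k ⊳ (pr p * pr p)
  pre : ∀ p, pr p ⊳ e = e

theorem Kc0 : Kc (p0 : T M) l0 where
  acy := Acy.p0
  d := rfl
  c := rfl
  ed := rfl
  ec := rfl
  eacy := Acy.l0
  assoc := ax PGAeq.B4 rfl rfl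
  comm := ax PGAeq.B5 rfl rfl
  unit := ax PGAeq.B6r rfl rfl
  idem := ax PGAeq.B16 rfl rfl
  prk := fun p => ax (PGAeq.D1 p) rfl rfl
  pre := fun p => ax (PGAeq.D2 p) rfl rfl
theorem Kc1 : Kc (p1 : T M) l1 where
  acy := Acy.p1
  d := rfl
  c := rfl
  ed := rfl
  ec := rfl
  eacy := Acy.l1
  assoc := ax PGAeq.B7 rfl rfl
  comm := ax PGAeq.B8 rfl rfl
  unit := ax PGAeq.B9r rfl rfl
  idem := ax PGAeq.B17 rfl rfl
  prk := fun p => ax (PGAeq.D3 p) rfl rfl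
  pre := fun p => ax (PGAeq.D4 p) rfl rfl

structure Kd (k e k' e' : T M) : Prop where
  dist : k ⊳ (k' * I [r]) = k' ⊳ ((k * k) ⊳ ((I [r] * (S [r] [r] * I [r])) ⊳ (I [r, r] * mg)))
  ann : k ⊳ (e' * I [r]) = e' ⊳ sta

theorem Kd01 : Kd (p0 : T M) l0 p1 l1 where
  dist := by
    have := (ax PGAeq.B20 rfl rfl : p0 ⊳ (p1 * I [r]) = (p1 ⊳ (p0 * p0) ⊳ ((I [r] * S [r] [r]) * I [r]) ⊳ ((I [r] * I [r]) * mg) : T M))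
    simpa using this
  ann := ax PGAeq.B21 rfl rfl
theorem Kd10 : Kd (p1 : T M) l1 p0 l0 where
  dist := by
    have := (ax PGAeq.B22 rfl rfl : p1 ⊳ (p0 * I [r]) = (p0 ⊳ (p1 * p1) ⊳ ((I [r] * S [r] [r]) * I [r]) ⊳ ((I [r] * I [r]) * mg) : T M))
    simpa using this
  ann := ax PGAeq.B23 rfl rfl

def jn (k : T M) (N : Word) (f g : T M) : T M := k ⊳ ((f * g) ⊳ mrg N)
def bt (e : T M) (N : Word) : T M := e ⊳ st N

theorem jn_mul (k : T M) (N : Word) (f g h : T M) (h1 : k.c = f.d ++ g.d) (h2 : f.c ++ g.c = N ++ N) : jn k N f g * h =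
    (k * I h.d) ⊳ ((f * (g * h)) ⊳ (mrg N * I h.c)) := by
  have e1 := interchange' k ((f * g) ⊳ mrg N) (I h.d) (h ⊳ I h.c) (by simp [h1]) (by simp)
  have e2 := interchange' (f * g) (mrg N) h (I h.c) (by simp [h2]) (by simp)
  rw [e2, comp_id' _ _ rfl, id_comp' _ _ rfl, mul_assoc'] at e1
  exact e1
theorem mul_jn (k : T M) (N : Word) (f g h : T M) (h1 : k.c = f.d ++ g.d) (h2 : f.c ++ g.c = N ++ N) : h * jn k N f g =
    (I h.d * k) ⊳ ((h * (f * g)) ⊳ (I h.c * mrg N)) := by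
  have e1 := interchange' (I h.d) (h ⊳ I h.c) k ((f * g) ⊳ mrg N) (by simp) (by simp [h1])
  have e2 := interchange' h (I h.c) (f * g) (mrg N) (by simp) (by simp [h2])
  rw [e2, comp_id' _ _ rfl, id_comp' _ _ rfl] at e1
  exact e1

section
variable {k e k' e' : T M} {N : Word} {f g h : T M}
theorem Hn.jn (K : Kc k e) (hf : Hn N f) (hg : Hn N g) : Hn N (jn k N f g) := by
  have := K.acy
  have a := K.d
  have b := K.c
  refine ⟨this.comp ((hf.acy.mul hg.acy).comp (Acy.mrg hf.rw) ?_) ?_, ?_, ?_⟩ <;>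
    simp [T.jn, hf.c, hg.c, hf.d, hg.d, a, b]
theorem Hn.bt (K : Kc k e) (hN : RW N) : Hn N (bt e N) := by
  refine ⟨K.eacy.comp (Acy.st hN) ?_, ?_, ?_⟩ <;> simp [T.bt, K.ec, K.ed]

theorem jn_idem (K : Kc k e) (hf : Hn N f) : jn k N f f = f := by
  have e := mrg_nat hf.acy
  rw [hf.d, hf.c, mrg_r] at e
  rw [jn, ← e, ← comp_assoc', K.idem, id_comp' _ _ hf.d]

theorem jn_comm (K : Kc k e) (hf : Hn N f) (hg : Hn N g) : jn k N f g = jn k N g f := by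
  have e := S_nat f g
  rw [hf.d, hf.c, hg.d, hg.c] at e
  rw [jn, ← mrg_comm hf.rw, ← comp_assoc' (f * g), e, comp_assoc', ← comp_assoc', K.comm]
  rfl

theorem jn_bt (K : Kc k e) (hf : Hn N f) : jn k N (bt e N) f = f := by
  have e1 := interchange' e (st N) f (I N) (by simp [K.ec]) hf.c
  have e2 := interchange' e (I []) (I [r]) f K.ec (by simp [hf.d])
  simp at e2
  rw [id_comp' _ _ hf.d, comp_one _ K.ec] at e2
  rw [comp_id' _ _ hf.c, e2] at e1
  rw [jn, bt, e1, comp_assoc', mrg_l hf.rw, comp_assoc', ← comp_assoc', K.unit, id_comp' _ _ (by simp [hf.d]),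
    comp_id' _ _ hf.c]

theorem jn_assoc (K : Kc k e) (hf : Hn N f) (hg : Hn N g) (hh : Hn N h) :
    jn k N (jn k N f g) h = jn k N f (jn k N g h) := by
  have ⟨a1, a2, _⟩ := hf
  have ⟨b1, b2, _⟩ := hg
  have ⟨c1, c2, _⟩ := hh
  have := K.c
  rw [jn, jn_mul _ _ _ _ _ (by simp [*]) (by simp [*]), jn, mul_jn _ _ _ _ _ (by simp [*]) (by simp [*])]
  simp only [hf.c, hf.d, hg.c, hg.d, hh.c, hh.d, comp_assoc']
  rw [← mrg_assoc hf.rw, ← comp_assoc', K.assoc, comp_assoc']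

theorem jn_ann (K : Kc k e) (K' : Kc k' e') (D : Kd k e k' e') (hf : Hn N f) :
    jn k N (bt e' N) f = bt e' N := by
  have e1 := interchange' e' (st N) f (I N) (by simp [K'.ec]) hf.c
  have e2 := interchange' e' (I []) (I [r]) f K'.ec (by simp [hf.d])
  have e3 := st_nat hf.acy
  rw [hf.d, hf.c, st_r] at e3
  simp at e2
  rw [id_comp' _ _ hf.d, comp_one _ K'.ec] at e2
  rw [comp_id' _ _ hf.c, e2] at e1
  rw [jn, bt, e1, comp_assoc', mrg_l hf.rw, comp_assoc', ← comp_assoc', D.ann, 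
    comp_id' _ _ hf.c, comp_assoc', e3]

theorem jn_dist (K : Kc k e) (K' : Kc k' e') (D : Kd k e k' e') (hf : Hn N f) (hg : Hn N g) (hh : Hn N h) :
    jn k N (jn k' N f g) h = jn k' N (jn k N f h) (jn k N g h) := by
  have ⟨a0, a1, a2⟩ := hf
  have ⟨b0, b1, b2⟩ := hg
  have ⟨c0, c1, c2⟩ := hh
  have k1 := K.c
  have k2 := K.d
  have k3 := K'.c
  have k4 := K'.d
  have e1 := mrg_nat hh.acy
  rw [hh.d, hh.c, mrg_r] at e1
  have e2 := interchange' (I [r, r]) (f * g) mg h (by simp [hf.d, hg.d]) (by simp [hh.d])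
  rw [e1, id_comp' _ _ (by simp [hf.d, hg.d])] at e2
  have e3 := interchange' (f * g) (mrg N) (h * h) (mrg N) (by simp [hf.c, hg.c]) (by simp [hh.c])
  have e4 := interchange' (f * g) (mrg N) ((h * h) ⊳ mrg N) (I N) (by simp [hf.c, hg.c]) (by simp [hh.c])
  rw [comp_id' _ _ (by simp), e3] at e4
  have e5 := S_nat h g
  rw [b1, b2, c1, c2] at e5
  have e6 := interchange' f (I N) ((h * g) * h) (S N N * I N) (by simp [*]) (by simp [*])
  have e7 := interchange' (h * g) (S N N) h (I N) (by simp [*]) (by simp [*])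
  have e8 := interchange' (I [r]) f (S [r] [r] * I [r]) ((g * h) * h) (by simp [*]) (by simp [*])
  have e9 := interchange' (S [r] [r]) (g * h) (I [r]) h (by simp [*]) (by simp [*])
  rw [comp_id' _ _ c2] at e7
  rw [id_comp' _ _ c1] at e9
  rw [comp_id' _ _ a2, ← e7, e5] at e6
  rw [id_comp' _ _ a1, ← e9, e6] at e8
  have f1 := interchange' k ((f * h) ⊳ mrg N) k ((g * h) ⊳ mrg N) (by simp [*]) (by simp [*])
  have f2 := interchange' (f * h) (mrg N) (g * h) (mrg N) (by simp [*]) (by simp [*])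
  rw [jn, jn_mul _ _ _ _ _ (by simp [*]) (by simp [*]), ← comp_assoc', ← comp_assoc', hh.d, D.dist]
  conv_rhs => rw [jn, jn, jn, f1, f2]
  simp only [comp_assoc', mul_assoc'] at *
  rw [re e2.symm, hh.c, re e4.symm]
  simp only [comp_assoc']
  conv_rhs => rw [← mrg_mid hf.rw, re e8]
  simp only [comp_assoc']

end
end T

namespace T
variable {M : ℕ}
open Obj

def L (M : ℕ) (N : Word) : Type := {f : T M // Hn N f}
variable {N : Word}
instance : Max (L M N) := ⟨fun f g => ⟨jn p0 N f.1 g.1, Hn.jn Kc0 f.2 g.2⟩⟩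
instance : Min (L M N) := ⟨fun f g => ⟨jn p1 N f.1 g.1, Hn.jn Kc1 f.2 g.2⟩⟩
theorem sup_val (f g : L M N) : (f ⊔ g).1 = jn p0 N f.1 g.1 := rfl
theorem inf_val (f g : L M N) : (f ⊓ g).1 = jn p1 N f.1 g.1 := rfl
theorem L_ext {f g : L M N} (h : f.1 = g.1) : f = g := Subtype.ext h

theorem L_sup_comm (f g : L M N) : f ⊔ g = g ⊔ f := L_ext (jn_comm Kc0 f.2 g.2)
theorem L_inf_comm (f g : L M N) : f ⊓ g = g ⊓ f := L_ext (jn_comm Kc1 f.2 g.2)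
theorem L_dist1 (f g h : L M N) : (f ⊔ g) ⊓ h = (f ⊓ h) ⊔ (g ⊓ h) := L_ext (jn_dist Kc1 Kc0 Kd10 f.2 g.2 h.2)
theorem L_dist2 (f g h : L M N) : (f ⊓ g) ⊔ h = (f ⊔ h) ⊓ (g ⊔ h) := L_ext (jn_dist Kc0 Kc1 Kd01 f.2 g.2 h.2)
def L_top (f : L M N) : L M N := ⟨bt l1 N, Hn.bt Kc1 f.2.rw⟩
def L_bot (f : L M N) : L M N := ⟨bt l0 N, Hn.bt Kc0 f.2.rw⟩

instance : Lattice (L M N) := Lattice.mk'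
  L_sup_comm
  (fun f g h => L_ext (jn_assoc Kc0 f.2 g.2 h.2))
  L_inf_comm
  (fun f g h => L_ext (jn_assoc Kc1 f.2 g.2 h.2))
  (fun f g => by
    have e1 : L_top f ⊓ f = f := L_ext (jn_bt Kc1 f.2)
    have e2 : L_top f ⊔ g = L_top f := L_ext (jn_ann Kc0 Kc1 Kd01 g.2)
    have e3 := L_dist1 (L_top f) g f
    rw [e1, e2, e1, L_inf_comm g] at e3
    exact e3.symm)
  (fun f g => by
    have e1 : L_bot f ⊔ f = f := L_ext (jn_bt Kc0 f.2)
    have e2 : L_bot f ⊓ g = L_bot f := L_ext (jn_ann Kc1 Kc0 Kd10 g.2)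
    have e3 := L_dist2 (L_bot f) g f
    rw [e1, e2, e1, L_sup_comm g] at e3
    exact e3.symm)

instance : DistribLattice (L M N) := DistribLattice.ofInfSupLe (fun a b c => by
  rw [inf_comm, L_dist1, inf_comm b, inf_comm c])

theorem dl_sup {α : Type} [DistribLattice α] (a c a' c' x : α) :
    (c ⊔ a ⊓ x) ⊔ (c' ⊔ a' ⊓ x) = (c ⊔ c') ⊔ (a ⊔ a') ⊓ x := by
  rw [inf_sup_right]; ac_rfl
theorem dl_inf {α : Type} [DistribLattice α] (a c a' c' x : α) :
    (c ⊔ a ⊓ x) ⊓ (c' ⊔ a' ⊓ x) = (c ⊓ c') ⊔ (((c ⊓ a') ⊔ (a ⊓ c')) ⊔ a ⊓ a') ⊓ x := by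
  rw [inf_sup_right, inf_sup_left, inf_sup_left, inf_sup_right, inf_sup_right, ← inf_inf_distrib_right]
  ac_rfl

inductive D (n : Word) (j : ℕ) : T M → Prop
  | base (f) : Hn n f → D n j (f * sta)
  | x (p) : p.val < j → D n j (st n * pr p)
  | sup (f g) : D n j f → D n j g → D n j (jn p0 (n ++ [r]) f g)
  | inf (f g) : D n j f → D n j g → D n j (jn p1 (n ++ [r]) f g)

theorem Hn.base {n : Word} {f : T M} (h : Hn n f) : Hn (n ++ [r]) (f * sta) :=
  ⟨h.acy.mul Acy.sta, by simp [h.d], by simp [h.c]⟩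
theorem Hn.x {n : Word} (hn : RW n) (p) : Hn (n ++ [r]) (st n * pr p : T M) :=
  ⟨(Acy.st hn).mul (Acy.pr p), by simp, by simp⟩

theorem D.hn {n : Word} (hn : RW n) {j} {f : T M} (h : D n j f) : Hn (n ++ [r]) f := by
  induction h with
  | base f h => exact h.base
  | x p hp => exact Hn.x hn p
  | sup f g _ _ h1 h2 => exact Hn.jn Kc0 h1 h2
  | inf f g _ _ h1 h2 => exact Hn.jn Kc1 h1 h2

theorem bt_base {k e : T M} (K : Kc k e) (n : Word) : bt e (n ++ [r]) = bt e n * sta := by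
  have e1 := interchange' e (st n) (I []) sta (by simp [K.ec]) (by simp)
  simp at e1
  rw [bt, st_append, st_r, ← e1, bt]

theorem D.bt {k e : T M} (K : Kc k e) {n : Word} (hn : RW n) {j} : D n j (bt e (n ++ [r])) := by
  rw [bt_base K]; exact D.base _ (Hn.bt K hn)

theorem D.nf {n : Word} (hn : RW n) {j} (p : Fin (M + 1)) (hp : p.val = j) {h : T M} (hD : D n (j + 1) h) :
    ∃ c a, D n j c ∧ D n j a ∧ h = jn p0 (n ++ [r]) c (jn p1 (n ++ [r]) a (st n * pr p)) := by
  have X := Hn.x hn p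
  have low : ∀ h, D n j h → ∃ c a, D n j c ∧ D n j a ∧ h = jn p0 (n ++ [r]) c (jn p1 (n ++ [r]) a (st n * pr p)) := by
    intro h hh
    refine ⟨h, _, hh, D.bt Kc0 hn, ?_⟩
    rw [jn_ann Kc1 Kc0 Kd10 X, jn_comm Kc0 (hh.hn hn) (Hn.bt Kc0 (hn.append RW.r)), jn_bt Kc0 (hh.hn hn)]
  induction hD with
  | base f hf => exact low _ (D.base f hf)
  | x q hq =>
    rcases Nat.lt_succ_iff_lt_or_eq.1 hq with hq | hq
    · exact low _ (D.x q hq)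
    · have : q = p := Fin.ext (by omega)
      subst this
      refine ⟨_, _, D.bt Kc0 hn, D.bt Kc1 hn, ?_⟩
      rw [jn_bt Kc1 X, jn_bt Kc0 X]
  | sup f g _ _ h1 h2 =>
    obtain ⟨c, a, hc, ha, rfl⟩ := h1
    obtain ⟨c', a', hc', ha', rfl⟩ := h2
    refine ⟨_, _, D.sup _ _ hc hc', D.sup _ _ ha ha', ?_⟩
    exact congrArg Subtype.val (dl_sup (α := L M (n ++ [r])) ⟨a, ha.hn hn⟩ ⟨c, hc.hn hn⟩ ⟨a', ha'.hn hn⟩ ⟨c', hc'.hn hn⟩ ⟨_, X⟩)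
  | inf f g _ _ h1 h2 =>
    obtain ⟨c, a, hc, ha, rfl⟩ := h1
    obtain ⟨c', a', hc', ha', rfl⟩ := h2
    refine ⟨_, _, D.inf _ _ hc hc', D.sup _ _ (D.sup _ _ (D.inf _ _ hc ha') (D.inf _ _ ha hc')) (D.inf _ _ ha ha'), ?_⟩
    exact congrArg Subtype.val (dl_inf (α := L M (n ++ [r])) ⟨a, ha.hn hn⟩ ⟨c, hc.hn hn⟩ ⟨a', ha'.hn hn⟩ ⟨c', hc'.hn hn⟩ ⟨_, X⟩)

theorem jn_pr {k e : T M} (K : Kc k e) {f g : T M} (hf : Hn N f) (hg : Hn N g) (p) :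
    pr p ⊳ jn k N f g = jn k N (pr p ⊳ f) (pr p ⊳ g) := by
  rw [jn, jn, interchange' _ _ _ _ (by simp [hf.d]) (by simp [hg.d]), ← comp_assoc', K.prk]
  simp only [comp_assoc']

theorem D.pr {n : Word} (hn : RW n) (p) {h : T M} (hD : D n (M + 1) h) : D n (M + 1) (pr p ⊳ h) := by
  induction hD with
  | base f hf =>
    have e1 := interchange' (T.pr p) f (I []) sta (by simp [hf.d]) (by simp)
    simp at e1
    rw [← e1]
    exact D.base _ ⟨(Acy.pr p).comp hf.acy (by simp [hf.d]), by simp, by simp [hf.c]⟩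
  | x q hq =>
    have e1 := interchange' (I []) (st n) (T.pr p) (T.pr q) (by simp) (by simp)
    have e2 : T.pr p ⊳ T.pr q = (T.pr (max p q) : T M) := ax (PGAeq.C3 p q) rfl rfl
    simp [e2] at e1
    rw [← e1]
    exact D.x _ (max p q).isLt
  | sup f g h1 h2 i1 i2 => rw [jn_pr Kc0 (h1.hn hn) (h2.hn hn)]; exact D.sup _ _ i1 i2
  | inf f g h1 h2 i1 i2 => rw [jn_pr Kc1 (h1.hn hn) (h2.hn hn)]; exact D.inf _ _ i1 i2

end T

namespace T
variable {M : ℕ}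
open Obj

def pt (a b : Word) : T M := st a * (I [r] * st b)
@[simp] theorem pt_d (a b : Word) : (pt a b : T M).d = [r] := by simp [pt]
@[simp] theorem pt_c (a b : Word) : (pt a b : T M).c = a ++ r :: b := by simp [pt]
theorem pt_st (a b v : Word) : (pt a b * st v : T M) = pt a (b ++ v) := by simp [pt, st_append]
theorem st_pt (a b v : Word) : (st v * pt a b : T M) = pt (v ++ a) b := by simp [pt, st_append]

def CD (P : T M → Prop) (u : Word) (h : T M) : Prop := ∀ a b, u = a ++ r :: b → P (pt a b ⊳ h)

theorem one_idx {a b : Word} (h : [r] = a ++ r :: b) : a = [] ∧ b = [] := by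
  cases a with
  | nil => simpa using h.symm
  | cons o a => simp at h
theorem two_idx {a b : Word} (h : [r, r] = a ++ r :: b) : (a = [] ∧ b = [r]) ∨ (a = [r] ∧ b = []) := by
  cases a with
  | nil => left; simpa using h.symm
  | cons o a =>
    right
    simp at h
    have := one_idx h.2
    simp [this, h.1]
theorem app_idx {u v a b : Word} (h : u ++ v = a ++ r :: b) :
    (∃ b', u = a ++ r :: b' ∧ b = b' ++ v) ∨ (∃ a', v = a' ++ r :: b ∧ a = u ++ a') := by
  rcases List.append_eq_append_iff.1 h with ⟨a', h1, h2⟩ | ⟨a', h1, h2⟩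
  · right; exact ⟨a', h2, h1⟩
  · cases a' with
    | nil => right; exact ⟨[], by simpa using h2.symm, by simpa using h1.symm⟩
    | cons o a' =>
      left
      simp at h2
      obtain ⟨rfl, h2⟩ := h2
      exact ⟨a', h1, h2⟩

theorem k_split {N : Word} {k h : T M} (hk : k.c = [r, r]) (hh : Acy h) (hd : h.d = [r, r]) (hc : h.c = N) :
    k ⊳ h = jn k N ((I [r] * sta) ⊳ h) ((sta * I [r]) ⊳ h) := by
  have := mrg_split (m := [r]) (m' := [r]) hh hd
  simp only [st_r, hc] at this
  rw [jn, ← this]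

theorem CD.pre {n : Word} (hn : RW n) {g : T M} (hg : Acy g) : ∀ h : T M, Acy h → h.d = g.c → h.c = n ++ [r] →
    CD (D n (M + 1)) g.c h → CD (D n (M + 1)) g.d (g ⊳ h) := by
  induction g, hg using Acy.ind with
  | id u hu =>
    intro h ah hd hc H
    rw [id_comp' _ u hd]; exact H
  | comp f g hf hg e h1 h2 =>
    intro h ah hd hc H
    simp only [comp_d, comp_c, comp_assoc'] at *
    refine h1 (g ⊳ h) (hg.comp ah hd.symm) (by simp [e]) (by simp [hc]) ?_
    rw [e]
    exact h2 h ah hd hc H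
  | symm u v hu hv =>
    intro h ah hd hc H a b hab
    rw [S_d] at hab
    rw [S_c] at H
    rcases app_idx hab with ⟨b', h1, rfl⟩ | ⟨a', h1, rfl⟩
    · have := H (v ++ a) b' (by simp [h1])
      have e := S_nat (M := M) (pt a b') (st v)
      simp at e
      rw [← pt_st, ← comp_assoc', h1, e, st_pt]
      exact this
    · have := H a' (b ++ u) (by simp [h1])
      have e := S_nat (M := M) (st u) (pt a' b)
      simp at e
      rw [← st_pt, ← comp_assoc', h1, e, pt_st]
      exact this
  | mul f g hf hg h1 h2 =>
    intro h ah hd hc H a b hab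
    rw [mul_d] at hab
    rw [mul_c] at H hd
    obtain ⟨q1, q2⟩ := hf.RWs
    obtain ⟨q3, q4⟩ := hg.RWs
    rcases app_idx hab with ⟨b', h3, rfl⟩ | ⟨a', h3, rfl⟩
    · have e1 := interchange' (pt a b') f (st g.d) g (by simp [h3]) (by simp)
      rw [st_nat hg] at e1
      have e2 := interchange' (pt a b' ⊳ f) (I f.c) (I []) (st g.c) (by simp) (by simp)
      simp at e2
      rw [← pt_st, ← comp_assoc', ← e1, e2]
      have := h1 ((I f.c * st g.c) ⊳ h) (((Acy.I q2).mul (Acy.st q4)).comp ah (by simp [hd])) (by simp) (by simp [hc]) ?_ a b' h3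
      · simpa using this
      · intro a1 b1 h4
        have := H a1 (b1 ++ g.c) (by simp [h4])
        have e3 := interchange' (M := M) (pt a1 b1) (I f.c) (I []) (st g.c) (by simp [h4]) (by simp)
        simp at e3
        rw [comp_id' _ _ (by simp [h4])] at e3
        rw [← comp_assoc', ← e3, pt_st]
        exact this
    · have e1 := interchange' (st f.d) f (pt a' b) g (by simp) (by simp [h3])
      rw [st_nat hf] at e1
      have e2 := interchange' (I []) (st f.c) (pt a' b ⊳ g) (I g.c) (by simp) (by simp)
      simp at e2
      rw [← st_pt, ← comp_assoc', ← e1, e2]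
      have := h2 ((st f.c * I g.c) ⊳ h) (((Acy.st q2).mul (Acy.I q4)).comp ah (by simp [hd])) (by simp) (by simp [hc]) ?_ a' b h3
      · simpa using this
      · intro a1 b1 h4
        have := H (f.c ++ a1) b1 (by simp [h4])
        have e3 := interchange' (M := M) (I []) (st f.c) (pt a1 b1) (I g.c) (by simp) (by simp [h4])
        simp at e3
        rw [comp_id' _ _ (by simp [h4])] at e3
        rw [← comp_assoc', ← e3, st_pt]
        exact this
  | p0 =>
    intro h ah hd hc H a b hab
    obtain ⟨rfl, rfl⟩ := one_idx hab
    have x1 := H [] [r] rfl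
    have x2 := H [r] [] rfl
    simp [pt] at x1 x2 ⊢
    rw [k_split rfl ah hd hc]
    exact D.sup _ _ x1 x2
  | p1 =>
    intro h ah hd hc H a b hab
    obtain ⟨rfl, rfl⟩ := one_idx hab
    have x1 := H [] [r] rfl
    have x2 := H [r] [] rfl
    simp [pt] at x1 x2 ⊢
    rw [k_split rfl ah hd hc]
    exact D.inf _ _ x1 x2
  | l0 =>
    intro h ah hd hc H a b hab
    obtain ⟨rfl, rfl⟩ := one_idx hab
    have := st_nat ah
    simp [hd, hc] at this
    simp [pt, this]
    exact D.bt Kc0 hn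
  | l1 =>
    intro h ah hd hc H a b hab
    obtain ⟨rfl, rfl⟩ := one_idx hab
    have := st_nat ah
    simp [hd, hc] at this
    simp [pt, this]
    exact D.bt Kc1 hn
  | mg =>
    intro h ah hd hc H a b hab
    have x := H [] [] rfl
    rcases two_idx hab with ⟨rfl, rfl⟩ | ⟨rfl, rfl⟩
    · simp [pt] at x ⊢
      rw [re mg_r]; exact x
    · simp [pt] at x ⊢
      rw [re mg_l]; exact x
  | sta =>
    intro h ah hd hc H a b hab
    simp at hab
  | pr p =>
    intro h ah hd hc H a b hab
    obtain ⟨rfl, rfl⟩ := one_idx hab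
    have x := H [] [] rfl
    simp at hd
    simp [pt, hd] at x ⊢
    exact D.pr hn p x

theorem D.all {n : Word} {h : T M} (hh : Hn (n ++ [r]) h) : D n (M + 1) h := by
  have hn : RW n := hh.rw.left
  have := CD.pre hn hh.acy (I (n ++ [r])) (Acy.I hh.rw) (by simp [hh.c]) (by simp) ?_ [] [] (by simp [hh.d])
  · have hd := hh.d
    rw [comp_id' _ _ hh.c] at this
    simpa [pt, hd] using this
  · rw [hh.c]
    intro a b hab
    rw [comp_id' _ _ (by simp [hab])]
    rcases app_idx hab with ⟨b', h1, rfl⟩ | ⟨a', h1, rfl⟩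
    · rw [← pt_st, st_r]
      subst h1
      exact D.base _ ⟨(Acy.st hn.left).mul ((Acy.I RW.r).mul (Acy.st (RW.cons hn.right).2)), by simp, by simp⟩
    · obtain ⟨rfl, rfl⟩ := one_idx h1
      have e : (T.pr 0 : T M) = I [r] := ax PGAeq.C4 rfl rfl
      have : D n (M + 1) (st n * T.pr 0 : T M) := D.x _ (by simp)
      simpa [pt, e] using this

end T

namespace T
variable {M : ℕ}
open Obj

/-- sliding of `sta` -/
theorem TrR_sta {m n : Word} {P : T M} (hd : P.d = m ++ [r]) (hc : P.c = n) :
    TrR m n (P ⊳ (I n * sta)) = (I m * sta) ⊳ P := by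
  subst hc
  have e1 := S_nat1 (M := M) sta [l]
  have e1' := rc (wh P.c [] e1) (I P.c * ca)
  have e2 := exch (M := M) P ((I [l] * sta) ⊳ ca) [] [] []
  have e3 := rc (exch (M := M) cu sta m [] []) 
  have e4 := rc (wh m [] (yank_r (M := M)))
  simp [hd] at e1' e2 e3 e4
  simp [TrR, ca', e1', e2]
  rw [e3, e4, id_comp' _ _ hd]

def E2 : T M := (I [r] * (ca' * I [l])) ⊳ ca'
def C2 : T M := cu ⊳ (I [r] * (cu * I [l]))
@[simp] theorem E2_d : (E2 : T M).d = [r, r, l, l] := by simp [E2]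
@[simp] theorem E2_c : (E2 : T M).c = [] := by simp [E2]
@[simp] theorem C2_d : (C2 : T M).d = [] := by simp [C2]
@[simp] theorem C2_c : (C2 : T M).c = [r, r, l, l] := by simp [C2]

theorem yy : (I [r, r] * C2) ⊳ ((S [r, r] [r, r] * I [l, l]) ⊳ (I [r, r] * E2)) = (I [r, r] : T M) := by
  have h1 := S_cons (M := M) [r, r] r [r]
  have h2 := S_cons' (M := M) [r] r [r]
  have e1 := rc (exch (M := M) (S [r, r] [r]) cu [] [] [l])
  have e2 := rc (exch (M := M) (S [r] [r]) ca' [r] [] [l])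
  have e3 := rc (wh [r, r] [l] (yank3 (M := M)))
  have e4 := rc (wh [] [l] (S_nat1 (M := M) (S [r] [r]) [r]))
  have e5 := rc (wh [r] [] (yank3 (M := M)))
  have e6 := exch (M := M) (S [r] [r]) ca' [] [] []
  have e7 := rc (exch (M := M) (S [r] [r]) cu [] [] [])
  simp [h2] at e1 e2 e3 e4 e5 e6 e7
  rw [E2, C2, h1, h2]
  simp
  rw [← e1, e2, e3, id_comp' _ _ (by simp), ← e4, e6, ← e7, e5, id_comp' _ _ (by simp), S_inv]
  rfl

def Q2 : T M := C2 ⊳ (mg * I [l, l])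
@[simp] theorem Q2_d : (Q2 : T M).d = [] := by simp [Q2]
@[simp] theorem Q2_c : (Q2 : T M).c = [r, l, l] := by simp [Q2]
def psi : T M := (I [l] * Q2) ⊳ (ca * I [l, l])
@[simp] theorem psi_d : (psi : T M).d = [l] := by simp [psi]
@[simp] theorem psi_c : (psi : T M).c = [l, l] := by simp [psi]

theorem cu_psi : cu ⊳ (I [r] * psi) = (Q2 : T M) := by
  have e1 := rc (exch (M := M) cu Q2 [] [] []) 
  have e2 := wh [] [l, l] (yank_r (M := M))
  simp at e1 e2
  simp [psi]
  rw [e1, e2]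
  simp

theorem psi_E2 : (I [r, r] * psi) ⊳ E2 = (mg * I [l]) ⊳ (ca' : T M) := by
  have e1 := rc (wh [] [l, l] (S_nat2 (M := M) ((I [l] * mg) ⊳ ca) [r, r]))
  have e2 := exch (M := M) ((I [l] * mg) ⊳ ca) E2 [] [] []
  have e3 := S_cons (M := M) [r, r] l [r, r]
  have e4 := rc (exch (M := M) (S [r, r] [l]) C2 [] [] [])
  have e5 := rc (wh [l] [] (yy (M := M)))
  have e6 := rc (S_nat1 (M := M) mg [l])
  simp [e3] at e1 e2 e3 e4 e5 e6
  simp [psi, Q2, ca']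
  rw [e1, e2, ← e4, e5, id_comp' _ _ (by simp), e6]

/-- sliding of `mg` -/
theorem TrR_mg {m n : Word} {P : T M} (hd : P.d = m ++ [r]) (hc : P.c = n ++ [r, r]) :
    TrR m n (P ⊳ (I n * mg)) = TrR m n (TrR (m ++ [r]) (n ++ [r]) ((I m * mg) ⊳ P)) := by
  have e1 := rc (wh m [] (cu_psi (M := M)))
  have e2 := rc (exch (M := M) P psi [] [] [])
  have e3 := wh n [] (psi_E2 (M := M))
  simp [Q2, C2, E2, hd, hc] at e1 e2 e3
  simp [TrR]
  rw [← e1, ← e2, ← e3]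

theorem TrR_S : TrR [r] [r] (S [r] [r]) = (I [r] : T M) := by
  rw [TrR, yank3]

theorem T3 {n : Word} {h : T M} (hd : h.d = [r]) (hc : h.c = n ++ [r, r]) :
    TrR [r] n (mg ⊳ (h ⊳ (I n * mg))) = TrR [r] n (mg ⊳ TrR [r] (n ++ [r]) (mg ⊳ h)) := by
  have e := TrR_mg (m := [r]) (n := n) (P := mg ⊳ h) (by simp) (by simp [hc])
  have e1 := TrR_pre (z := n ++ [r]) (F := mg ⊳ h) (g := mg)
  simp at e e1
  rw [e, ← e1, re mg_assoc]
  simp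

theorem T5 {n : Word} {f : T M} (hf : Hn n f) : TrR [r] n (mg ⊳ (f * sta)) = f := by
  have e := TrR_sta (m := [r]) (n := n) (P := mg ⊳ f) (by simp) (by simp [hf.c])
  have e1 := ten_fst f sta
  simp [hf.c] at e e1
  rw [e1, e, re mg_r, id_comp' _ _ hf.d]

theorem ca_slide : (S [r] [r] * I [l]) ⊳ (I [r] * ca') = (I [r] * S [r] [l]) ⊳ (ca' * I [r] : T M) := by
  have e1 := S_nat1 (M := M) ca' [r]
  have e2 := S_cons' (M := M) [r] r [l]
  simp [e2] at e1
  rw [e1]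
  simp

def K1 (p : Fin (M + 1)) : T M := p0 ⊳ ((p1 ⊳ (I [r] * pr p)) * I [r])
@[simp] theorem K1_d (p) : (K1 p : T M).d = [r] := by simp [K1]
@[simp] theorem K1_c (p) : (K1 p : T M).c = [r, r, r] := by simp [K1]

theorem par_eq (p : Fin (M + 1)) : TrR [r] [r, r] (mg ⊳ (K1 p ⊳ (I [r] * S [r] [r]))) = mk' (parityLHS M p) := by
  have : mk' (parityLHS M p) = (I [r] * cu) ⊳ ((mg ⊳ p0 ⊳ ((p1 ⊳ (I [r] * pr p)) * I [r])) * I [l]) ⊳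
    ((I [r] * I [r]) * S [r] [l]) ⊳ ((I [r] * S [r] [l]) * I [r]) ⊳ (I [r] * ca * I [r]) := rfl
  rw [this]
  have e := wh [r] [] (ca_slide (M := M))
  simp at e
  simp [TrR, K1, e]
  simp [ca']

theorem par_even (p : Fin (M + 1)) (h : Even p.val) : TrR [r] [r, r] (mg ⊳ (K1 p ⊳ (I [r] * S [r] [r]))) = p0 := by
  rw [par_eq]; exact mk'_eq (PGAeq.parity_even p h)
theorem par_odd (p : Fin (M + 1)) (h : Odd p.val) : TrR [r] [r, r] (mg ⊳ (K1 p ⊳ (I [r] * S [r] [r]))) = sta * I [r] := by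
  rw [par_eq]; exact mk'_eq (PGAeq.parity_odd p h)

end T

namespace T
variable {M : ℕ}
open Obj

theorem mrg_snoc (n : Word) : (mrg (n ++ [r]) : T M) = (I n * (S [r] n * I [r])) ⊳ ((mrg n * I [r, r]) ⊳ (I n * mg)) := by
  have e := ten_fst (M := M) (mrg n) mg
  simp at e
  rw [mrg_append', mrg_r, e]

theorem T2 {m n : Word} {F : T M} (hF : Acy F) (hd : F.d = m ++ [r]) (hc : F.c = n ++ [r]) :
    TrR m n F = ((I m * sta) ⊳ F) ⊳ ((I n * TrR [r] n (mg ⊳ ((st m * I [r]) ⊳ F))) ⊳ mrg n) := by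
  have e0 := mrg_split hF hd
  rw [st_r, hc] at e0
  obtain ⟨F1, h1⟩ : ∃ F1, F1 = (I m * sta) ⊳ F := ⟨_, rfl⟩
  obtain ⟨h, h2⟩ : ∃ h, h = (st m * I [r]) ⊳ F := ⟨_, rfl⟩
  rw [← h1, ← h2] at e0 ⊢
  have d1 : F1.d = m := by simp [h1]
  have c1 : F1.c = n ++ [r] := by simp [h1, hc]
  have d2 : h.d = [r] := by simp [h2]
  have c2 : h.c = n ++ [r] := by simp [h2, hc]
  rw [mrg_snoc] at e0
  have a1 := TrR_mg (m := m) (n := n) (P := (F1 * h) ⊳ ((I n * (S [r] n * I [r])) ⊳ (mrg n * I [r, r])))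
    (by simp [d1, d2]) (by simp)
  have a2 := TrR_post (m := m ++ [r]) (z := n ++ r :: n) (F := (I m * mg) ⊳ (F1 * h)) (g := (I n * S [r] n) ⊳ (mrg n * I [r])) (by simp)
  obtain ⟨h', h3⟩ : ∃ h', h' = TrR [r] n (mg ⊳ h) := ⟨_, rfl⟩
  have d3 : h'.d = [r] := by simp [h3]
  have c3 : h'.c = n := by simp [h3]
  have a3 : TrR (m ++ [r]) (n ++ r :: n) ((I m * mg) ⊳ (F1 * h)) = F1 * h' := by
    have b1 := TrR_pre (z := n ++ r :: n) (g := F1 * I [r]) (F := I (n ++ [r]) * (mg ⊳ h))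
    have b2 := TrR_wl (n ++ [r]) (m := [r]) (z := n) (F := mg ⊳ h)
    have b3 := ten_fst F1 (mg ⊳ h)
    have b4 := interchange' (I m) F1 mg h (by simp [d1]) (by simp [d2])
    have b5 := ten_fst F1 h'
    rw [id_comp' _ _ d1] at b4
    simp [d1, c1, d2, c2, d3, c3] at b1 b2 b3 b4 b5
    rw [← b4, b3, b1, b5, h3, b2]
  have a4 := wh n [] (S_nat2 h' [r])
  have a5 := ten_fst F1 h'
  have a6 := TrR_post (m := m) (z := n ++ [r]) (F := (F1 * I [r]) ⊳ (I n * S [r] [r])) (g := (I n * h') ⊳ mrg n) (by simp [d3])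
  have a7 := TrR_pre (z := n ++ [r]) (g := F1) (F := I n * S [r] [r])
  have a8 := TrR_wl (M := M) n (m := [r]) (z := [r]) (F := S [r] [r])
  rw [TrR_S] at a8
  simp [d1, c1, d2, c2, d3, c3] at a1 a2 a3 a4 a5 a6 a7 a8 e0
  clear h1 h2
  rw [e0, a1, a2, a3, ← h3, a5]
  simp
  rw [re a4]
  simp only [comp_assoc']
  rw [a6, a7, ← a8, comp_id' _ _ c1]

theorem T4 {n : Word} {c a : T M} (hn : RW n) (hc : Hn (n ++ [r]) c) (ha : Hn (n ++ [r]) a) (p) :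
    jn p0 (n ++ [r]) c (jn p1 (n ++ [r]) a (st n * pr p)) =
     (K1 p ⊳ (I [r] * S [r] [r]) ⊳ (S [r] [r] * I [r])) ⊳ ((((c * a) ⊳ mrg (n ++ [r])) * I [r]) ⊳ (I n * mg)) := by
  have hN := hn.append RW.r
  obtain ⟨B, hB⟩ : ∃ B, B = (c * a) ⊳ mrg (n ++ [r]) := ⟨_, rfl⟩
  have ⟨_, dc, cc⟩ := hc
  have ⟨_, da, ca⟩ := ha
  have dB : B.d = [r, r] := by simp [hB, dc, da]
  have cB : B.c = n ++ [r] := by simp [hB]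
  rw [jn, mul_jn _ _ _ _ _ (by simp [da]) (by simp [ca])]
  simp only [comp_assoc', dc, cc]
  have e0 := interchange' (c * a) (mrg (n ++ [r])) (st n * pr p) (I (n ++ [r])) (by simp [cc, ca]) (by simp)
  rw [← hB, comp_id' _ _ (by simp)] at e0
  have e1 : (B * (st n * pr p)) ⊳ mrg (n ++ [r]) = (B * pr p) ⊳ (I n * mg) := by
    have f1 := rc (wh n [r] (S_nat2 (M := M) (st n) [r]))
    have f2 := ten_fst B (st n * pr p)
    have f3 := rc (exch (st n) (pr p) (n ++ [r]) [] [])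
    have f4 := rc (wh [] [r, r] (mrg_r' (M := M) hn))
    have f5 := ten_fst B (pr p)
    have f6 := ten_snd (st n) (pr p)
    rw [mrg_snoc]
    simp [dB, cB] at f1 f2 f3 f4 f5 f6 ⊢
    rw [f2, f6, f5]
    simp
    rw [f1, f4, id_comp' _ _ (by simp)]
  rw [← mrg_assoc hN, ← mul_assoc', re e0.symm, e1, ← hB]
  have e2 := S_nat (M := M) p1 (I [r])
  have e3 := re (Kc0 (M := M)).comm
  have e4 := S_nat (M := M) (p1 ⊳ (I [r] * pr p)) (I [r])
  have e5 := S_cons' (M := M) [r] r [r]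
  have e6 := ten_snd B (pr p)
  simp [dB, cB, e5, K1] at e3 e4 e6 ⊢
  have e7 := rc e4
  simp only [comp_assoc'] at e7
  rw [e7, e3, e6, comp_assoc']

theorem T4' {n : Word} {c a : T M} (hn : RW n) (hc : Hn (n ++ [r]) c) (ha : Hn (n ++ [r]) a) (p) :
    TrR [r] n (mg ⊳ jn p0 (n ++ [r]) c (jn p1 (n ++ [r]) a (st n * pr p))) =
    TrR [r] n (mg ⊳ ((TrR [r] [r, r] (mg ⊳ (K1 p ⊳ (I [r] * S [r] [r])))) ⊳ (S [r] [r] ⊳ ((c * a) ⊳ mrg (n ++ [r]))))) := by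
  have ⟨_, dc, cc⟩ := hc
  have ⟨_, da, ca⟩ := ha
  have e1 := T3 (n := n) (h := (K1 p ⊳ (I [r] * S [r] [r]) ⊳ (S [r] [r] * I [r])) ⊳ (((c * a) ⊳ mrg (n ++ [r])) * I [r]))
    (by simp) (by simp)
  have e2 := TrR_post (m := [r]) (z := [r, r]) (F := mg ⊳ (K1 p ⊳ (I [r] * S [r] [r])))
    (g := S [r] [r] ⊳ ((c * a) ⊳ mrg (n ++ [r]))) (by simp)
  rw [T4 hn hc ha]
  simp only [comp_assoc'] at e1
  simp at e1 e2 ⊢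
  rw [e1, ← e2]

theorem T4even {n : Word} {c a : T M} (hn : RW n) (hc : Hn (n ++ [r]) c) (ha : Hn (n ++ [r]) a) (p)
    (h : Even p.val) :
    TrR [r] n (mg ⊳ jn p0 (n ++ [r]) c (jn p1 (n ++ [r]) a (st n * pr p))) =
    TrR [r] n (mg ⊳ jn p0 (n ++ [r]) c a) := by
  rw [T4' hn hc ha, par_even p h, re Kc0.comm, jn]

theorem T4odd {n : Word} {c a : T M} (hn : RW n) (hc : Hn (n ++ [r]) c) (ha : Hn (n ++ [r]) a) (p)
    (h : Odd p.val) :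
    TrR [r] n (mg ⊳ jn p0 (n ++ [r]) c (jn p1 (n ++ [r]) a (st n * pr p))) =
    TrR [r] n (mg ⊳ c) := by
  have e1 := S_nat1 (M := M) sta [r]
  have e2 := interchange' (I [r]) c sta a (by simp [hc.d]) (by simp [ha.d])
  have e3 := st_nat ha.acy
  have e4 := ten_fst c (st (n ++ [r]))
  rw [ha.d, ha.c, st_r] at e3
  rw [e3, id_comp' _ _ hc.d] at e2
  simp [hc.c, hc.d] at e1 e4
  rw [T4' hn hc ha, par_odd p h, re e1, re e2.symm, e4, comp_assoc', mrg_r' hc.rw, comp_id' _ _ hc.c]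

theorem jn_sta {n : Word} {k e f g : T M} (K : Kc k e) (hf : Hn n f) (hg : Hn n g) :
    jn k (n ++ [r]) (f * sta) (g * sta) = jn k n f g * sta := by
  have ⟨_, df, cf⟩ := hf
  have ⟨_, dg, cg⟩ := hg
  have e1 : (sta * g) ⊳ S [r] n = g * sta := by
    have h := S_nat sta g
    simp only [sta_c, sta_d, dg, cg] at h
    rw [h]
    simp [dg, id_comp']
  have e3 : (f * (sta * (g * sta))) ⊳ (I n * (S [r] n * I [r])) = (f * g) * (sta * sta) := by
    have h1 := interchange' (sta * g) (S [r] n) sta (I [r]) (by simp [cg]) (by simp)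
    have h2 := interchange' f (I n) ((sta * g) * sta) (S [r] n * I [r]) (by simp [cf]) (by simp [cg])
    rw [comp_id' _ _ cf, ← h1, e1, comp_id' _ _ (by simp)] at h2
    simp only [mul_assoc'] at h2 ⊢
    exact h2.symm
  have e4 := interchange' (f * g) (mrg n) (sta * sta) mg (by simp [cf, cg]) (by simp)
  have e5 : (sta * sta) ⊳ mg = (sta : T M) := by simpa [st, sto] using st_nat (M := M) Acy.mg
  have e6 := interchange' k ((f * g) ⊳ mrg n) (I []) sta (by simp [K.c, df, dg]) (by simp)
  rw [e5] at e4
  rw [id_comp' sta _ (by simp), e4] at e6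
  rw [jn, jn, mrg_append', mrg_r, mul_assoc', re e3, e6]
  simp

theorem D.zero {n : Word} (hn : RW n) {h : T M} (hD : D n 0 h) : ∃ f, Hn n f ∧ h = f * sta := by
  induction hD with
  | base f hf => exact ⟨f, hf, rfl⟩
  | x p hp => omega
  | sup f g _ _ h1 h2 =>
    obtain ⟨f, hf, rfl⟩ := h1
    obtain ⟨g, hg, rfl⟩ := h2
    exact ⟨_, Hn.jn Kc0 hf hg, jn_sta Kc0 hf hg⟩
  | inf f g _ _ h1 h2 =>
    obtain ⟨f, hf, rfl⟩ := h1
    obtain ⟨g, hg, rfl⟩ := h2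
    exact ⟨_, Hn.jn Kc1 hf hg, jn_sta Kc1 hf hg⟩

theorem D.tr {n : Word} (hn : RW n) : ∀ j, j ≤ M + 1 → ∀ h : T M, D n j h → Acy (TrR [r] n (mg ⊳ h)) := by
  intro j
  induction j with
  | zero =>
    intro _ h hD
    obtain ⟨f, hf, rfl⟩ := hD.zero hn
    rw [T5 hf]; exact hf.acy
  | succ j ih =>
    intro hj h hD
    obtain ⟨c, a, hc, ha, rfl⟩ := hD.nf hn ⟨j, by omega⟩ rfl
    rcases Nat.even_or_odd j with h | h
    · rw [T4even hn (hc.hn hn) (ha.hn hn) _ h]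
      exact ih (by omega) _ (D.sup _ _ hc ha)
    · rw [T4odd hn (hc.hn hn) (ha.hn hn) _ h]
      exact ih (by omega) _ hc

theorem trAcy (M : ℕ) : TrAcy M := by
  intro m n F hF hd hc
  rw [T2 hF hd hc]
  have hm : RW m := (hd ▸ hF.RWs.1).left
  have hn : RW n := (hc ▸ hF.RWs.2).left
  refine (((Acy.I hm).mul Acy.sta).comp hF (by simp [hd])).comp (((Acy.I hn).mul ?_).comp (Acy.mrg hn) (by simp)) (by simp [hc])
  exact D.tr hn (M + 1) le_rfl _ (D.all ⟨((Acy.st hm).mul (Acy.I RW.r)).comp hF (by simp [hd]), by simp, by simp [hc]⟩)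

end T

/-- **Statement 9** (Loop removal). Every diagram `d : ▶^m → ▶^n` is PGA-equal to an
acyclic one, i.e. to a diagram composed only of the generators
`player0, lose0, player1, lose1, merge, start, priority p` (no `cup` or `cap`). -/
theorem loop_removal (M : ℕ) (hM : 2 ≤ M) (m n : ℕ) (d : Syn M (rword m) (rword n)) :
    ∃ d' : Syn M (rword m) (rword n), Acyclic d' ∧ PGAeq d d' := by
  exact T.main_of (T.trAcy M) m n d

end PaperPG
end

section
/- (Soundness of the distributivity axiom B20, semantically) Let L be the open parity game with one entry position 1, three exit positions 1, 2, 3, all internal priorities 0, internal positions u (owned by Player 0) and w (owned by Player 1), and edges: entry 1 → u, u → w, u → exit 3, w → exit 1, w → exit 2. Let R be the open parity game with one entry position 1, three exit positions 1, 2, 3, all internal priorities 0, internal positions w′ (owned by Player 1), u₁ and u₂ (owned by Player 0) and m (owned by Player 1), and edges: entry 1 → w′, w′ → u₁, w′ → u₂, u₁ → exit 1, u₁ → m, u₂ → exit 2, u₂ → m, m → exit 3. Then ⟦L⟧ = ⟦R⟧ = {(T,1) : T ⊆ {1,2,3}×ℙ and ({(1,0),(2,0)} ⊆ T or (3,0)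 ∈ T)}. -/
set_option autoImplicit true
set_option linter.unusedVariables false

namespace PaperPG

/-! ## Open parity games and their semantics -/

/-- An open parity game of type `m → n`, where `m = (m⁺, m⁻)` and `n = (n⁺, n⁻)`:
entry positions are `Fin (m.1 + n.2)`, exit positions are `Fin (m.2 + n.1)`,
`V` internal positions with owners, a priority labelling bounded by `M`,
an edge relation with a unique edge out of each entry position and a unique
edge into each exit position. -/
structure OPG (M : ℕ) (m n : ℕ × ℕ) where
  V : ℕ
  owner0 : Fin V → Bool
  E : (Fin (m.1 + n.2) ⊕ Fin V) → (Fin V ⊕ Fin (m.2 + n.1)) → Prop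
  prio : Fin V → ℕ
  prio_le : ∀ v, prio v ≤ M
  entry_unique : ∀ i, ∃! t, E (Sum.inl i) t
  exit_unique : ∀ o, ∃! s, E s (Sum.inr o)

namespace OPG

variable {M : ℕ} {m n : ℕ × ℕ}

/-- Entry positions together with internal positions: the possible sources of edges. -/
abbrev EntryV (A : OPG M m n) := Fin (m.1 + n.2) ⊕ Fin A.V

/-- All positions of an open parity game: entries + internal positions + exits. -/
abbrev Node (A : OPG M m n) := (Fin (m.1 + n.2) ⊕ Fin A.V) ⊕ Fin (m.2 + n.1)

def embed (A : OPG M m n) : (Fin A.V ⊕ Fin (m.2 + n.1)) → A.Node :=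
  Sum.map Sum.inr id

/-- A strategy for Player 0 (`pl = true`) or Player 1 (`pl = false`): for every
finite history ending at a position owned by that player it chooses a successor
along an edge (and it must choose one whenever an outgoing edge exists). -/
def Strat (A : OPG M m n) (pl : Bool) :=
  { σ : List A.EntryV → Option (Fin A.V ⊕ Fin (m.2 + n.1)) //
      ∀ l v, l.getLast? = some (Sum.inr v) → A.owner0 v = pl →
        (∀ t, σ l = some t → A.E (Sum.inr v) t) ∧
        ((∃ t, A.E (Sum.inr v) t) → (σ l).isSome) }

/-- The history (sequence of non-exit positions) of a play up to time `k`. -/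
def histList (A : OPG M m n) (p : ℕ → Option A.Node) : ℕ → List A.EntryV
  | 0 => []
  | k + 1 => A.histList p k ++
      (match p k with
        | some (Sum.inl s) => [s]
        | _ => [])

/-- `p` is the play induced by the strategies `σ0` and `σ1` starting at entry `i`. -/
def IsPlay (A : OPG M m n) (σ0 : A.Strat true) (σ1 : A.Strat false)
    (i : Fin (m.1 + n.2)) (p : ℕ → Option A.Node) : Prop :=
  p 0 = some (Sum.inl (Sum.inl i)) ∧
  ∀ k : ℕ,
    (p k = none → p (k + 1) = none) ∧
    (∀ o : Fin (m.2 + n.1), p k = some (Sum.inr o) → p (k + 1) = none) ∧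
    (∀ e : Fin (m.1 + n.2), p k = some (Sum.inl (Sum.inl e)) →
        ∃ t, A.E (Sum.inl e) t ∧ p (k + 1) = some (A.embed t)) ∧
    (∀ v : Fin A.V, p k = some (Sum.inl (Sum.inr v)) →
        p (k + 1) = Option.map A.embed
          ((if A.owner0 v then σ0.1 else σ1.1) (A.histList p (k + 1))))

/-- Maximum priority encountered along a play up to time `k`. -/
def maxPrioUpTo (A : OPG M m n) (p : ℕ → Option A.Node) (k : ℕ) : ℕ :=
  (Finset.range (k + 1)).sup fun j =>
    match p j with
    | some (Sum.inl (Sum.inr v)) => A.prio v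
    | _ => 0

/-- The play `p` is finite, ends at exit position `o`, and the maximum priority
encountered along it is `k`. -/
def EndsAtExit (A : OPG M m n) (p : ℕ → Option A.Node) (o : Fin (m.2 + n.1)) (k : ℕ) : Prop :=
  ∃ j, p j = some (Sum.inr o) ∧ A.maxPrioUpTo p j = k

/-- Priority `k` occurs infinitely often along `p`. -/
def InfOften (A : OPG M m n) (p : ℕ → Option A.Node) (k : ℕ) : Prop :=
  ∀ N, ∃ j, N ≤ j ∧ ∃ v : Fin A.V, p j = some (Sum.inl (Sum.inr v)) ∧ A.prio v = k

/-- The play is infinite and the maximum priority occurring infinitely often is even: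
Player 0 wins the parity condition. -/
def Wins0Inf (A : OPG M m n) (p : ℕ → Option A.Node) : Prop :=
  ∃ k, A.InfOften p k ∧ Even k ∧ ∀ j, A.InfOften p j → j ≤ k

/-- The play is infinite and the maximum priority occurring infinitely often is odd:
Player 1 wins the parity condition. -/
def Wins1Inf (A : OPG M m n) (p : ℕ → Option A.Node) : Prop :=
  ∃ k, A.InfOften p k ∧ Odd k ∧ ∀ j, A.InfOften p j → j ≤ k

/-- The play ends at a Player-0 position with no available move (a loss for Player 0). -/
def DeadEnd0 (A : OPG M m n) (p : ℕ → Option A.Node) : Prop :=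
  ∃ j v, p j = some (Sum.inl (Sum.inr v)) ∧ p (j + 1) = none ∧ A.owner0 v = true

/-- `⟨i, σ0⟩ = lose`: some Player-1 strategy produces a play that is losing for Player 0. -/
def LosesFrom (A : OPG M m n) (i : Fin (m.1 + n.2)) (σ0 : A.Strat true) : Prop :=
  ∃ (σ1 : A.Strat false) (p : ℕ → Option A.Node),
    A.IsPlay σ0 σ1 i p ∧ (A.Wins1Inf p ∨ A.DeadEnd0 p)

/-- The denotation `⟨i, σ0⟩` (when it is not `lose`): the set of pairs `(o, k)` of an
exit position and a maximal priority realised by some play against a Player-1 strategy. -/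
def denot (A : OPG M m n) (i : Fin (m.1 + n.2)) (σ0 : A.Strat true) :
    Set (Fin (m.2 + n.1) × ℕ) :=
  { x | ∃ (σ1 : A.Strat false) (p : ℕ → Option A.Node),
      A.IsPlay σ0 σ1 i p ∧ A.EndsAtExit p x.1 x.2 }

/-- The semantics `⟦A⟧` of an open parity game: all pairs `(T, i)` with
`T ⊆ exits(A) × ℙ` such that, for some Player-0 strategy `σ0`,
`⟨i,σ0⟩ ≠ lose` and `⟨i,σ0⟩ ⊆ T`. -/
def sem (A : OPG M m n) : Set (Set (Fin (m.2 + n.1) × ℕ) × Fin (m.1 + n.2)) :=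
  { Ti | (∀ x ∈ Ti.1, x.2 ≤ M) ∧
      ∃ σ0 : A.Strat true, ¬ A.LosesFrom Ti.2 σ0 ∧ A.denot Ti.2 σ0 ⊆ Ti.1 }

/-- Equivalence of open parity games: equality of semantics. -/
def equiv (A B : OPG M m n) : Prop := A.sem = B.sem

end OPG
/-- The left-hand game of axiom B20: entry `1 → u`; `u` (Player 0) moves to `w` or
to exit 3; `w` (Player 1) moves to exit 1 or exit 2; all priorities 0.
Internally `u, w` are `0, 1` and exits `1, 2, 3` are the indices `0, 1, 2`. -/
def B20L (M : ℕ) : OPG M (1, 0) (3, 0) where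
  V := 2
  owner0 := fun v => v.val == 0
  prio := fun _ => 0
  prio_le := fun _ => Nat.zero_le M
  E := fun s t =>
    (match s, t with
      | Sum.inl _, Sum.inl v => v.val == 0
      | Sum.inr v, Sum.inl v' => v.val == 0 && v'.val == 1
      | Sum.inr v, Sum.inr z =>
          (v.val == 0 && z.val == 2) || (v.val == 1 && (z.val == 0 || z.val == 1))
      | _, _ => false) = true
  entry_unique := by unfold ExistsUnique; decide
  exit_unique := by unfold ExistsUnique; decide

/-- The right-hand game of axiom B20: entry `1 → w′`; `w′` (Player 1) moves to `u₁`
or `u₂`; `u₁` (Player 0) moves to exit 1 or to `m`; `u₂` (Player 0) moves to exit 2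
or to `m`; `m` (Player 1) moves to exit 3; all priorities 0.
Internally `w′, u₁, u₂, m` are `0, 1, 2, 3`. -/
def B20R (M : ℕ) : OPG M (1, 0) (3, 0) where
  V := 4
  owner0 := fun v => v.val == 1 || v.val == 2
  prio := fun _ => 0
  prio_le := fun _ => Nat.zero_le M
  E := fun s t =>
    (match s, t with
      | Sum.inl _, Sum.inl v => v.val == 0
      | Sum.inr v, Sum.inl v' =>
          (v.val == 0 && (v'.val == 1 || v'.val == 2)) ||
            ((v.val == 1 || v.val == 2) && v'.val == 3)
      | Sum.inr v, Sum.inr z =>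
          (v.val == 1 && z.val == 0) || (v.val == 2 && z.val == 1) ||
            (v.val == 3 && z.val == 2)
      | _, _ => false) = true
  entry_unique := by unfold ExistsUnique; decide
  exit_unique := by unfold ExistsUnique; decide

namespace OPG

variable {M : ℕ} {m n : ℕ × ℕ}

def pos (A : OPG M m n) (pl : Bool) (f : Fin A.V → (Fin A.V ⊕ Fin (m.2 + n.1)))
    (hf : ∀ v, A.E (Sum.inr v) (f v)) : A.Strat pl :=
  ⟨fun l => match l.getLast? with
      | some (Sum.inr v) => some (f v)
      | _ => none, by
    intro l v hl _
    simp only [hl]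
    refine ⟨?_, fun _ => rfl⟩
    intro t ht
    cases ht
    exact hf v⟩

theorem pos_apply (A : OPG M m n) (pl : Bool) (f : Fin A.V → (Fin A.V ⊕ Fin (m.2 + n.1)))
    (hf : ∀ v, A.E (Sum.inr v) (f v)) (l : List A.EntryV) (v : Fin A.V)
    (hl : l.getLast? = some (Sum.inr v)) : (A.pos pl f hf).1 l = some (f v) := by
  simp only [pos, hl]

theorem hist_last (A : OPG M m n) (p : ℕ → Option A.Node) (k : ℕ) (s : A.EntryV)
    (h : p k = some (Sum.inl s)) : (A.histList p (k + 1)).getLast? = some s := by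
  simp [histList, h]

theorem step (A : OPG M m n) (hs : ∀ v, ∃ t, A.E (Sum.inr v) t)
    (σ0 : A.Strat true) (σ1 : A.Strat false) (i : Fin (m.1 + n.2)) (p : ℕ → Option A.Node)
    (hp : A.IsPlay σ0 σ1 i p) (k : ℕ) (v : Fin A.V) (hk : p k = some (Sum.inl (Sum.inr v))) :
    ∃ t, A.E (Sum.inr v) t ∧ p (k + 1) = some (A.embed t) ∧
      (∀ f hf, σ0 = A.pos true f hf → A.owner0 v = true → t = f v) ∧
      (∀ f hf, σ1 = A.pos false f hf → A.owner0 v = false → t = f v) := by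
  have h := (hp.2 k).2.2.2 v hk
  have hl := A.hist_last p k _ hk
  cases ho : A.owner0 v with
  | true =>
    rw [ho, if_pos rfl] at h
    obtain ⟨h1, h2⟩ := σ0.2 _ v hl ho
    obtain ⟨t, ht⟩ := Option.isSome_iff_exists.1 (h2 (hs v))
    refine ⟨t, h1 t ht, by rw [h, ht]; rfl, ?_, by simp⟩
    rintro f hf rfl _
    rw [A.pos_apply _ f hf _ v hl] at ht
    exact (Option.some.inj ht).symm
  | false =>
    rw [ho, if_neg (by simp)] at h
    obtain ⟨h1, h2⟩ := σ1.2 _ v hl ho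
    obtain ⟨t, ht⟩ := Option.isSome_iff_exists.1 (h2 (hs v))
    refine ⟨t, h1 t ht, by rw [h, ht]; rfl, by simp, ?_⟩
    rintro f hf rfl _
    rw [A.pos_apply _ f hf _ v hl] at ht
    exact (Option.some.inj ht).symm

theorem invariant (A : OPG M m n) (hs : ∀ v, ∃ t, A.E (Sum.inr v) t)
    (σ0 : A.Strat true) (σ1 : A.Strat false) (i : Fin (m.1 + n.2)) (p : ℕ → Option A.Node)
    (hp : A.IsPlay σ0 σ1 i p) (S : Fin A.V ⊕ Fin (m.2 + n.1) → Prop)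
    (h0 : ∀ e t, A.E (Sum.inl e) t → S t)
    (h1 : ∀ v t, S (Sum.inl v) → A.E (Sum.inr v) t →
      (∀ f hf, σ0 = A.pos true f hf → A.owner0 v = true → t = f v) →
      (∀ f hf, σ1 = A.pos false f hf → A.owner0 v = false → t = f v) → S t) :
    ∀ k t, p k = some (A.embed t) → S t := by
  have inj : Function.Injective A.embed := by
    rintro (a | a) (b | b) h <;> simp_all [embed]
  intro k
  induction k with
  | zero =>
    intro t ht
    rw [hp.1] at ht
    rcases t with t | t <;> simp [embed] at ht
  | succ k ih =>
    intro t ht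
    rcases hk : p k with _ | ((e | v) | o)
    · rw [(hp.2 k).1 hk] at ht; cases ht
    · obtain ⟨t', hE, h⟩ := (hp.2 k).2.2.1 e hk
      rw [h] at ht
      rw [← inj (Option.some.inj ht)]
      exact h0 _ _ hE
    · obtain ⟨t', hE, h, a, b⟩ := A.step hs σ0 σ1 i p hp k v hk
      rw [h] at ht
      rw [← inj (Option.some.inj ht)]
      exact h1 v t' (ih (Sum.inl v) hk) hE a b
    · rw [(hp.2 k).2.1 o hk] at ht; cases ht

theorem not_loses (A : OPG M m n) (hs : ∀ v, ∃ t, A.E (Sum.inr v) t) (hz : ∀ v, A.prio v = 0)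
    (i : Fin (m.1 + n.2)) (σ0 : A.Strat true) : ¬ A.LosesFrom i σ0 := by
  rintro ⟨σ1, p, hp, ⟨k, hk, ho, _⟩ | ⟨j, v, hj, hn, _⟩⟩
  · obtain ⟨j, _, v, _, hv⟩ := hk 0
    rw [hz] at hv
    subst hv
    simp at ho
  · obtain ⟨t, _, h, _⟩ := A.step hs σ0 σ1 i p hp j v hj
    rw [hn] at h; cases h

theorem maxPrio_zero (A : OPG M m n) (hz : ∀ v, A.prio v = 0) (p : ℕ → Option A.Node) (k : ℕ) :
    A.maxPrioUpTo p k = 0 := by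
  unfold maxPrioUpTo
  rw [← Nat.le_zero]
  apply Finset.sup_le
  intro j _
  split <;> simp [hz]

open Classical in
noncomputable def next (A : OPG M m n) (σ0 : A.Strat true) (σ1 : A.Strat false) :
    Option A.Node → List A.EntryV → Option A.Node
  | some (Sum.inl (Sum.inl e)), _ => some (A.embed (A.entry_unique e).choose)
  | some (Sum.inl (Sum.inr v)), l =>
      Option.map A.embed ((if A.owner0 v then σ0.1 else σ1.1) l)
  | _, _ => none

noncomputable def state (A : OPG M m n) (σ0 : A.Strat true) (σ1 : A.Strat false)
    (i : Fin (m.1 + n.2)) : ℕ → List A.EntryV × Option A.Node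
  | 0 => ([], some (Sum.inl (Sum.inl i)))
  | k + 1 =>
      let s := A.state σ0 σ1 i k
      let h := s.1 ++ (match s.2 with
        | some (Sum.inl s) => [s]
        | _ => [])
      (h, A.next σ0 σ1 s.2 h)

theorem exists_play (A : OPG M m n) (σ0 : A.Strat true) (σ1 : A.Strat false)
    (i : Fin (m.1 + n.2)) : ∃ p, A.IsPlay σ0 σ1 i p := by
  have hh : ∀ k, A.histList (fun k => (A.state σ0 σ1 i k).2) k = (A.state σ0 σ1 i k).1 := by
    intro k
    induction k with
    | zero => rfl
    | succ k ih => simp only [histList, ih, state]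
  have hn : ∀ k, (A.state σ0 σ1 i (k+1)).2 =
      A.next σ0 σ1 (A.state σ0 σ1 i k).2 (A.state σ0 σ1 i (k+1)).1 := fun k => rfl
  refine ⟨fun k => (A.state σ0 σ1 i k).2, rfl, fun k => ⟨?_, ?_, ?_, ?_⟩⟩
  · intro h; simp only at h; simp only [hn, h, next]
  · intro o h; simp only at h; simp only [hn, h, next]
  · intro e h; simp only at h
    exact ⟨_, (A.entry_unique e).choose_spec.1, by simp only [hn, h, next]⟩
  · intro v h; simp only at h
    rw [hh]
    simp only [hn k, h, next]

/-- Abstract upper bound: a positional strategy and an invariant. -/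
theorem denot_sub (A : OPG M m n) (hs : ∀ v, ∃ t, A.E (Sum.inr v) t) (hz : ∀ v, A.prio v = 0)
    (i : Fin (m.1 + n.2)) (f : Fin A.V → (Fin A.V ⊕ Fin (m.2 + n.1)))
    (hf : ∀ v, A.E (Sum.inr v) (f v)) (S : Fin A.V ⊕ Fin (m.2 + n.1) → Prop)
    (h0 : ∀ e t, A.E (Sum.inl e) t → S t)
    (h1 : ∀ v t, S (Sum.inl v) → A.E (Sum.inr v) t → (A.owner0 v = true → t = f v) → S t)
    (T : Set (Fin (m.2 + n.1) × ℕ)) (hT : ∀ o, S (Sum.inr o) → (o, 0) ∈ T) :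
    A.denot i (A.pos true f hf) ⊆ T := by
  rintro ⟨o, k⟩ ⟨σ1, p, hp, j, hj, hk⟩
  rw [A.maxPrio_zero hz] at hk
  simp only at hk hj
  subst hk
  exact hT o (A.invariant hs _ σ1 i p hp S h0
    (fun v t a b c _ => h1 v t a b (c f hf rfl)) j (Sum.inr o) hj)

/-- Abstract lower bound: Player 1 plays positionally; the rank decreases along edges. -/
theorem exists_exit (A : OPG M m n) (hs : ∀ v, ∃ t, A.E (Sum.inr v) t) (hz : ∀ v, A.prio v = 0)
    (i : Fin (m.1 + n.2)) (σ0 : A.Strat true) (f : Fin A.V → (Fin A.V ⊕ Fin (m.2 + n.1)))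
    (hf : ∀ v, A.E (Sum.inr v) (f v)) (S : Fin A.V ⊕ Fin (m.2 + n.1) → Prop)
    (h0 : ∀ e t, A.E (Sum.inl e) t → S t)
    (h1 : ∀ v t, S (Sum.inl v) → A.E (Sum.inr v) t → (A.owner0 v = false → t = f v) → S t)
    (hr : ∀ v w, A.E (Sum.inr v) (Sum.inl w) → v < w) :
    ∃ o, S (Sum.inr o) ∧ (o, 0) ∈ A.denot i σ0 := by
  obtain ⟨p, hp⟩ := A.exists_play σ0 (A.pos false f hf) i
  have key : ∀ N k (v : Fin A.V), A.V - v.val ≤ N → p k = some (Sum.inl (Sum.inr v)) →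
      ∃ j o, p j = some (Sum.inr o) := by
    intro N
    induction N with
    | zero => intro k v h; have := v.2; omega
    | succ N ih =>
      intro k v h hk
      obtain ⟨t, hE, ht, _⟩ := A.step hs _ _ i p hp k v hk
      rcases t with w | o
      · have := hr v w hE
        exact ih (k+1) w (by have := v.2; have := w.2; simp only [Fin.lt_def] at *; omega) ht
      · exact ⟨k+1, o, ht⟩
  have : ∃ j o, p j = some (Sum.inr o) := by
    obtain ⟨t, _, ht⟩ := (hp.2 0).2.2.1 i hp.1
    rcases t with w | o
    · exact key _ _ w le_rfl ht
    · exact ⟨1, o, ht⟩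
  obtain ⟨j, o, hj⟩ := this
  refine ⟨o, A.invariant hs _ _ i p hp S h0
    (fun v t a b _ c => h1 v t a b (c f hf rfl)) j (Sum.inr o) hj, _, p, hp, j, hj,
    A.maxPrio_zero hz p j⟩

end OPG

def fL (a : Fin 2 ⊕ Fin 3) (b : Fin 2 ⊕ Fin 3) : Fin 2 → Fin 2 ⊕ Fin 3 := ![a, b]

theorem semL (M : ℕ) (T : Set (Fin 3 × ℕ)) (i : Fin 1) :
    (∃ σ0 : (B20L M).Strat true, ¬ (B20L M).LosesFrom i σ0 ∧ (B20L M).denot i σ0 ⊆ T) ↔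
      (((0, 0) ∈ T ∧ (1, 0) ∈ T) ∨ (2, 0) ∈ T) := by
  have hs : ∀ v, ∃ t, (B20L M).E (Sum.inr v) t := by
    show ∀ v : Fin 2, ∃ t : Fin 2 ⊕ Fin 3, (B20L 0).E (Sum.inr v) t
    unfold B20L; decide
  have hz : ∀ v, (B20L M).prio v = 0 := fun _ => rfl
  constructor
  · rintro ⟨σ0, -, hσ⟩
    obtain ⟨o, ho, hd⟩ := (B20L M).exists_exit hs hz i σ0 (fL (.inl 1) (.inr 0))
      (by show ∀ v : Fin 2, (B20L 0).E (Sum.inr v) (fL (.inl 1) (.inr 0) v)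
          unfold B20L; decide)
      (fun t => t ≠ Sum.inr (1 : Fin 3))
      (by show ∀ (e : Fin 1) (t : Fin 2 ⊕ Fin 3), (B20L 0).E (.inl e) t → t ≠ Sum.inr (1 : Fin 3)
          unfold B20L; decide)
      (by show ∀ (v : Fin 2) (t : Fin 2 ⊕ Fin 3), (.inl v : Fin 2 ⊕ Fin 3) ≠ Sum.inr (1 : Fin 3) →
            (B20L 0).E (.inr v) t → ((B20L 0).owner0 v = false → t = fL (.inl 1) (.inr 0) v) →
             t ≠ Sum.inr (1 : Fin 3)
          unfold B20L; decide)
      (by show ∀ (v w : Fin 2), (B20L 0).E (.inr v) (.inl w) → v < w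
          unfold B20L; decide)
    obtain ⟨o', ho', hd'⟩ := (B20L M).exists_exit hs hz i σ0 (fL (.inl 1) (.inr 1))
      (by show ∀ v : Fin 2, (B20L 0).E (Sum.inr v) (fL (.inl 1) (.inr 1) v)
          unfold B20L; decide)
      (fun t => t ≠ Sum.inr (0 : Fin 3))
      (by show ∀ (e : Fin 1) (t : Fin 2 ⊕ Fin 3), (B20L 0).E (.inl e) t → t ≠ Sum.inr (0 : Fin 3)
          unfold B20L; decide)
      (by show ∀ (v : Fin 2) (t : Fin 2 ⊕ Fin 3), (.inl v : Fin 2 ⊕ Fin 3) ≠ Sum.inr (0 : Fin 3) →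
            (B20L 0).E (.inr v) t → ((B20L 0).owner0 v = false → t = fL (.inl 1) (.inr 1) v) →
             t ≠ Sum.inr (0 : Fin 3)
          unfold B20L; decide)
      (by show ∀ (v w : Fin 2), (B20L 0).E (.inr v) (.inl w) → v < w
          unfold B20L; decide)
    have a := hσ hd
    have b := hσ hd'
    clear hd hd' hσ
    change Fin 3 at o o'
    change (o, 0) ∈ T at a
    change (o', 0) ∈ T at b
    fin_cases o <;> fin_cases o' <;> simp at ho ho' a b <;> tauto
  · rintro (⟨h0, h1⟩ | h2)
    · refine ⟨_, (B20L M).not_loses hs hz i _, (B20L M).denot_sub hs hz i (fL (.inl 1) (.inr 0))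
        (by show ∀ v : Fin 2, (B20L 0).E (Sum.inr v) (fL (.inl 1) (.inr 0) v)
            unfold B20L; decide)
        (fun t => t ≠ Sum.inr (2 : Fin 3))
        (by show ∀ (e : Fin 1) (t : Fin 2 ⊕ Fin 3), (B20L 0).E (.inl e) t → t ≠ Sum.inr (2 : Fin 3)
            unfold B20L; decide)
        (by show ∀ (v : Fin 2) (t : Fin 2 ⊕ Fin 3), (.inl v : Fin 2 ⊕ Fin 3) ≠ Sum.inr (2 : Fin 3) →
              (B20L 0).E (.inr v) t → ((B20L 0).owner0 v = true → t = fL (.inl 1) (.inr 0) v) →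
               t ≠ Sum.inr (2 : Fin 3)
            unfold B20L; decide) T ?_⟩
      intro o ho
      change Fin 3 at o
      fin_cases o
      · exact h0
      · exact h1
      · exact absurd rfl ho
    · refine ⟨_, (B20L M).not_loses hs hz i _, (B20L M).denot_sub hs hz i (fL (.inr 2) (.inr 0))
        (by show ∀ v : Fin 2, (B20L 0).E (Sum.inr v) (fL (.inr 2) (.inr 0) v)
            unfold B20L; decide)
        (fun t => t = Sum.inl (0 : Fin 2) ∨ t = Sum.inr (2 : Fin 3))
        (by show ∀ (e : Fin 1) (t : Fin 2 ⊕ Fin 3), (B20L 0).E (.inl e) t →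
              t = Sum.inl (0 : Fin 2) ∨ t = Sum.inr (2 : Fin 3)
            unfold B20L; decide)
        (by show ∀ (v : Fin 2) (t : Fin 2 ⊕ Fin 3),
              ((.inl v : Fin 2 ⊕ Fin 3) = Sum.inl (0 : Fin 2) ∨
                (.inl v : Fin 2 ⊕ Fin 3) = Sum.inr (2 : Fin 3)) →
              (B20L 0).E (.inr v) t → ((B20L 0).owner0 v = true → t = fL (.inr 2) (.inr 0) v) →
               t = Sum.inl (0 : Fin 2) ∨ t = Sum.inr (2 : Fin 3)
            unfold B20L; decide) T ?_⟩
      rintro o (ho | ho)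
      · cases ho
      · cases ho; exact h2

def fR (a b c : Fin 4 ⊕ Fin 3) : Fin 4 → Fin 4 ⊕ Fin 3 := ![a, b, c, .inr 2]

theorem semR (M : ℕ) (T : Set (Fin 3 × ℕ)) (i : Fin 1) :
    (∃ σ0 : (B20R M).Strat true, ¬ (B20R M).LosesFrom i σ0 ∧ (B20R M).denot i σ0 ⊆ T) ↔
      (((0, 0) ∈ T ∧ (1, 0) ∈ T) ∨ (2, 0) ∈ T) := by
  have hs : ∀ v, ∃ t, (B20R M).E (Sum.inr v) t := by
    show ∀ v : Fin 4, ∃ t : Fin 4 ⊕ Fin 3, (B20R 0).E (Sum.inr v) t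
    unfold B20R; decide
  have hz : ∀ v, (B20R M).prio v = 0 := fun _ => rfl
  constructor
  · rintro ⟨σ0, -, hσ⟩
    obtain ⟨o, ho, hd⟩ := (B20R M).exists_exit hs hz i σ0 (fR (.inl 1) (.inr 0) (.inr 1))
      (by show ∀ v : Fin 4, (B20R 0).E (Sum.inr v) (fR (.inl 1) (.inr 0) (.inr 1) v)
          unfold B20R; decide)
      (fun t => t ≠ Sum.inl (2 : Fin 4) ∧ t ≠ Sum.inr (1 : Fin 3))
      (by show ∀ (e : Fin 1) (t : Fin 4 ⊕ Fin 3), (B20R 0).E (.inl e) t →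
            t ≠ Sum.inl (2 : Fin 4) ∧ t ≠ Sum.inr (1 : Fin 3)
          unfold B20R; decide)
      (by show ∀ (v : Fin 4) (t : Fin 4 ⊕ Fin 3),
            ((.inl v : Fin 4 ⊕ Fin 3) ≠ Sum.inl (2 : Fin 4) ∧
              (.inl v : Fin 4 ⊕ Fin 3) ≠ Sum.inr (1 : Fin 3)) →
            (B20R 0).E (.inr v) t →
            ((B20R 0).owner0 v = false → t = fR (.inl 1) (.inr 0) (.inr 1) v) →
             t ≠ Sum.inl (2 : Fin 4) ∧ t ≠ Sum.inr (1 : Fin 3)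
          unfold B20R; decide)
      (by show ∀ (v w : Fin 4), (B20R 0).E (.inr v) (.inl w) → v < w
          unfold B20R; decide)
    obtain ⟨o', ho', hd'⟩ := (B20R M).exists_exit hs hz i σ0 (fR (.inl 2) (.inr 0) (.inr 1))
      (by show ∀ v : Fin 4, (B20R 0).E (Sum.inr v) (fR (.inl 2) (.inr 0) (.inr 1) v)
          unfold B20R; decide)
      (fun t => t ≠ Sum.inl (1 : Fin 4) ∧ t ≠ Sum.inr (0 : Fin 3))
      (by show ∀ (e : Fin 1) (t : Fin 4 ⊕ Fin 3), (B20R 0).E (.inl e) t →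
            t ≠ Sum.inl (1 : Fin 4) ∧ t ≠ Sum.inr (0 : Fin 3)
          unfold B20R; decide)
      (by show ∀ (v : Fin 4) (t : Fin 4 ⊕ Fin 3),
            ((.inl v : Fin 4 ⊕ Fin 3) ≠ Sum.inl (1 : Fin 4) ∧
              (.inl v : Fin 4 ⊕ Fin 3) ≠ Sum.inr (0 : Fin 3)) →
            (B20R 0).E (.inr v) t →
            ((B20R 0).owner0 v = false → t = fR (.inl 2) (.inr 0) (.inr 1) v) →
             t ≠ Sum.inl (1 : Fin 4) ∧ t ≠ Sum.inr (0 : Fin 3)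
          unfold B20R; decide)
      (by show ∀ (v w : Fin 4), (B20R 0).E (.inr v) (.inl w) → v < w
          unfold B20R; decide)
    have a := hσ hd
    have b := hσ hd'
    clear hd hd' hσ
    replace ho := ho.2
    replace ho' := ho'.2
    change Fin 3 at o o'
    change (o, 0) ∈ T at a
    change (o', 0) ∈ T at b
    fin_cases o <;> fin_cases o' <;> simp at ho ho' a b <;> tauto
  · rintro (⟨h0, h1⟩ | h2)
    · refine ⟨_, (B20R M).not_loses hs hz i _,
        (B20R M).denot_sub hs hz i (fR (.inl 1) (.inr 0) (.inr 1))
        (by show ∀ v : Fin 4, (B20R 0).E (Sum.inr v) (fR (.inl 1) (.inr 0) (.inr 1) v)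
            unfold B20R; decide)
        (fun t => t ≠ Sum.inl (3 : Fin 4) ∧ t ≠ Sum.inr (2 : Fin 3))
        (by show ∀ (e : Fin 1) (t : Fin 4 ⊕ Fin 3), (B20R 0).E (.inl e) t →
              t ≠ Sum.inl (3 : Fin 4) ∧ t ≠ Sum.inr (2 : Fin 3)
            unfold B20R; decide)
        (by show ∀ (v : Fin 4) (t : Fin 4 ⊕ Fin 3),
              ((.inl v : Fin 4 ⊕ Fin 3) ≠ Sum.inl (3 : Fin 4) ∧
                (.inl v : Fin 4 ⊕ Fin 3) ≠ Sum.inr (2 : Fin 3)) →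
              (B20R 0).E (.inr v) t →
              ((B20R 0).owner0 v = true → t = fR (.inl 1) (.inr 0) (.inr 1) v) →
               t ≠ Sum.inl (3 : Fin 4) ∧ t ≠ Sum.inr (2 : Fin 3)
            unfold B20R; decide) T ?_⟩
      intro o ho
      change Fin 3 at o
      fin_cases o
      · exact h0
      · exact h1
      · exact absurd rfl ho.2
    · refine ⟨_, (B20R M).not_loses hs hz i _,
        (B20R M).denot_sub hs hz i (fR (.inl 1) (.inl 3) (.inl 3))
        (by show ∀ v : Fin 4, (B20R 0).E (Sum.inr v) (fR (.inl 1) (.inl 3) (.inl 3) v)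
            unfold B20R; decide)
        (fun t => t ≠ Sum.inr (0 : Fin 3) ∧ t ≠ Sum.inr (1 : Fin 3))
        (by show ∀ (e : Fin 1) (t : Fin 4 ⊕ Fin 3), (B20R 0).E (.inl e) t →
              t ≠ Sum.inr (0 : Fin 3) ∧ t ≠ Sum.inr (1 : Fin 3)
            unfold B20R; decide)
        (by show ∀ (v : Fin 4) (t : Fin 4 ⊕ Fin 3),
              ((.inl v : Fin 4 ⊕ Fin 3) ≠ Sum.inr (0 : Fin 3) ∧
                (.inl v : Fin 4 ⊕ Fin 3) ≠ Sum.inr (1 : Fin 3)) →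
              (B20R 0).E (.inr v) t →
              ((B20R 0).owner0 v = true → t = fR (.inl 1) (.inl 3) (.inl 3) v) →
               t ≠ Sum.inr (0 : Fin 3) ∧ t ≠ Sum.inr (1 : Fin 3)
            unfold B20R; decide) T ?_⟩
      intro o ho
      change Fin 3 at o
      fin_cases o
      · exact absurd rfl ho.1
      · exact absurd rfl ho.2
      · exact h2

/-- **Statement 11** (Soundness of the distributivity axiom B20, semantically).
`⟦L⟧ = ⟦R⟧ = {(T,1) | {(1,0),(2,0)} ⊆ T or (3,0) ∈ T}`. -/
theorem B20_sound (M : ℕ) (hM : 2 ≤ M) :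
    (B20L M).sem =
      { Ti : Set (Fin ((1, 0).2 + (3, 0).1) × ℕ) × Fin ((1, 0).1 + (3, 0).2) |
          (∀ x ∈ Ti.1, x.2 ≤ M) ∧
          (((⟨0, by omega⟩, 0) ∈ Ti.1 ∧ (⟨1, by omega⟩, 0) ∈ Ti.1) ∨
            (⟨2, by omega⟩, 0) ∈ Ti.1) } ∧
    (B20R M).sem =
      { Ti : Set (Fin ((1, 0).2 + (3, 0).1) × ℕ) × Fin ((1, 0).1 + (3, 0).2) |
          (∀ x ∈ Ti.1, x.2 ≤ M) ∧
          (((⟨0, by omega⟩, 0) ∈ Ti.1 ∧ (⟨1, by omega⟩, 0) ∈ Ti.1) ∨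
            (⟨2, by omega⟩, 0) ∈ Ti.1) } := by
  refine ⟨?_, ?_⟩
  · ext ⟨T, i⟩
    exact and_congr_right fun _ => semL M T i
  · ext ⟨T, i⟩
    exact and_congr_right fun _ => semR M T i

end PaperPG
end

section
/- (Faithfulness of the open-game semantics on closed-boundary games) Let A : m → (0,0) be an open parity game with no exit positions in which every internal position has at least one outgoing edge, and let i be an entry position of A. Then (∅, i) ∈ ⟦A⟧ if and only if Player 0 has a winning strategy from i, i.e. there is a 0-strategy σ₀ such that for every 1-strategy σ₁, the (necessarily infinite) play from i induced by σ₀ and σ₁ has a maximum infinitely-often-occurring priority which is even. -/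
set_option autoImplicit true
set_option linter.unusedVariables false

namespace PaperPG

theorem OPG.none_after {M : ℕ} {m n : ℕ × ℕ} (A : OPG M m n) (σ0 : A.Strat true)
    (σ1 : A.Strat false) (i : Fin (m.1 + n.2)) (p : ℕ → Option A.Node)
    (hp : A.IsPlay σ0 σ1 i p) (j : ℕ) (hj : p j = none) : ¬ A.Wins0Inf p := by
  have h : ∀ d, p (j + d) = none := by
    intro d
    induction d with
    | zero => exact hj
    | succ d ih => exact (hp.2 (j + d)).1 ih
  rintro ⟨k, hk, -, -⟩
  obtain ⟨l, hl, v, hv, -⟩ := hk j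
  obtain ⟨d, rfl⟩ := Nat.exists_eq_add_of_le hl
  rw [h d] at hv
  cases hv

theorem OPG.hist_last_s8 {M : ℕ} {m n : ℕ × ℕ} (A : OPG M m n) (p : ℕ → Option A.Node)
    (k : ℕ) (s : A.EntryV) (h : p k = some (Sum.inl s)) :
    (A.histList p (k + 1)).getLast? = some s := by
  simp [OPG.histList, h]

theorem OPG.exists_max {M : ℕ} {m n : ℕ × ℕ} (A : OPG M m n) (p : ℕ → Option A.Node)
    (h : ∀ k, ∃ v : Fin A.V, p (k + 1) = some (Sum.inl (Sum.inr v))) :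
    ∃ k, A.InfOften p k ∧ ∀ j, A.InfOften p j → j ≤ k := by
  classical
  choose f hf using h
  have hb : ∀ k, A.InfOften p k → k ≤ M := by
    intro k hk
    obtain ⟨j, -, v, -, rfl⟩ := hk 0
    exact A.prio_le v
  obtain ⟨v, hv⟩ := Finite.exists_infinite_fiber f
  have hinf : A.InfOften p (A.prio v) := by
    intro N
    have hv' : (f ⁻¹' {v}).Infinite := Set.infinite_coe_iff.mp hv
    obtain ⟨b, hb1, hb2⟩ := hv'.exists_gt N
    exact ⟨b + 1, by omega, v, by rw [hf b]; rw [show f b = v from hb1], rfl⟩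
  exact ⟨Nat.findGreatest (fun k => A.InfOften p k) M,
    Nat.findGreatest_spec (P := fun k => A.InfOften p k) (hb _ hinf) hinf,
    fun j hj => Nat.le_findGreatest (hb j hj) hj⟩

/-- **Statement 14** (Faithfulness of the open-game semantics on closed-boundary
games). Let `A : m → (0,0)` be an open parity game with no exit positions in which
every internal position has an outgoing edge, and let `i` be an entry position.
Then `(∅, i) ∈ ⟦A⟧` iff Player 0 has a strategy `σ0` such that, against every
Player-1 strategy, the induced (infinite) play from `i` satisfies the parity
condition for Player 0. -/
theorem closed_boundary_faithful (M : ℕ) (hM : 2 ≤ M) (m : ℕ × ℕ)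
    (A : OPG M m (0, 0)) (hout : ∀ v : Fin A.V, ∃ t, A.E (Sum.inr v) t)
    (i : Fin (m.1 + (0, 0).2)) :
    ((∅ : Set (Fin (m.2 + (0, 0).1) × ℕ)), i) ∈ A.sem ↔
      ∃ σ0 : A.Strat true, ∀ (σ1 : A.Strat false) (p : ℕ → Option A.Node),
        A.IsPlay σ0 σ1 i p → A.Wins0Inf p := by
  constructor
  · rintro ⟨-, σ0, hl, hd⟩
    refine ⟨σ0, fun σ1 p hp => ?_⟩
    have hex : ∀ j o, p j ≠ some (Sum.inr o) := by
      intro j o h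
      exact hd (show ((o, A.maxPrioUpTo p j) : _ × ℕ) ∈ A.denot i σ0 from
        ⟨σ1, p, hp, j, h, rfl⟩)
    have hint : ∀ k, ∃ v : Fin A.V, p (k + 1) = some (Sum.inl (Sum.inr v)) := by
      have key : ∀ k t, p (k + 1) = some (A.embed t) →
          ∃ v : Fin A.V, p (k + 1) = some (Sum.inl (Sum.inr v)) := by
        rintro k (v | o) h
        · exact ⟨v, h⟩
        · exact absurd h (hex _ o)
      intro k
      induction k with
      | zero =>
        obtain ⟨t, -, ht⟩ := (hp.2 0).2.2.1 i hp.1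
        exact key 0 t ht
      | succ k ih =>
        obtain ⟨v, hv⟩ := ih
        have h1 := (hp.2 (k + 1)).2.2.2 v hv
        have h2 := A.hist_last_s8 p (k + 1) _ hv
        cases ho : A.owner0 v with
        | true =>
          obtain ⟨t, ht⟩ := Option.isSome_iff_exists.mp ((σ0.2 _ v h2 ho).2 (hout v))
          refine key _ t ?_
          rw [h1, ho, if_pos rfl, ht]; rfl
        | false =>
          obtain ⟨t, ht⟩ := Option.isSome_iff_exists.mp ((σ1.2 _ v h2 ho).2 (hout v))
          refine key _ t ?_
          rw [h1, ho, if_neg (by simp), ht]; rfl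
    obtain ⟨k, hk, hmax⟩ := A.exists_max p hint
    rcases Nat.even_or_odd k with he | ho
    · exact ⟨k, hk, he, hmax⟩
    · exact absurd ⟨σ1, p, hp, Or.inl ⟨k, hk, ho, hmax⟩⟩ hl
  · rintro ⟨σ0, h⟩
    refine ⟨fun x hx => absurd hx (Set.notMem_empty x), σ0, ?_, ?_⟩
    · rintro ⟨σ1, p, hp, hw | ⟨j, v, -, hn, -⟩⟩
      · obtain ⟨k, hk, he, hm⟩ := h σ1 p hp
        obtain ⟨k', hk', ho, hm'⟩ := hw
        have : k = k' := le_antisymm (hm' k hk) (hm k' hk')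
        subst this
        exact (Nat.not_even_iff_odd.mpr ho) he
      · exact A.none_after σ0 σ1 i p hp _ hn (h σ1 p hp)
    · rintro x ⟨σ1, p, hp, j, hj, -⟩
      exact absurd (h σ1 p hp) (A.none_after σ0 σ1 i p hp _ ((hp.2 j).2.1 _ hj))

end PaperPG
end
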